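/- Anti-counting Lemma: let k ≥ 2 be an integer and let U and W be graphons such that |t(F,U) − t(F,W)| ≤ 2^{−k²} for every finite simple graph F on k nodes. Then δ_□(U, W) ≤ 20/√(log₂ k). -/

import Mathlib

open MeasureTheory Set Filter

/-- The Lebesgue measure restricted to `[0,1]`. -/
noncomputable abbrev μ01 : MeasureTheory.Measure ℝ :=
  MeasureTheory.volume.restrict (Set.Icc (0:ℝ) 1)

/-- A graphon: a symmetric measurable function `[0,1]² → [0,1]`
(defined on all of `ℝ²` for convenience). -/
def IsGraphon (W : ℝ → ℝ → ℝ) : Prop :=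
  Measurable (Function.uncurry W) ∧ (∀ x y, W x y = W y x) ∧ ∀ x y, W x y ∈ Set.Icc (0:ℝ) 1

-- The homomorphism density `t(F,W)` of a finite simple graph `F` in a graphon `W`.
open scoped Classical in
noncomputable def homDensity {n : ℕ} (F : SimpleGraph (Fin n)) (W : ℝ → ℝ → ℝ) : ℝ :=
  ∫ x : Fin n → ℝ,
    (∏ p ∈ Finset.univ.filter (fun p : Fin n × Fin n => p.1 < p.2 ∧ F.Adj p.1 p.2),
      W (x p.1) (x p.2)) ∂(MeasureTheory.Measure.pi fun _ => μ01)

/-- The cut norm `‖U‖_□` of a kernel `U`. -/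
noncomputable def cutNorm (U : ℝ → ℝ → ℝ) : ℝ :=
  sSup { r : ℝ | ∃ S T : Set ℝ, MeasurableSet S ∧ MeasurableSet T ∧
    S ⊆ Set.Icc (0:ℝ) 1 ∧ T ⊆ Set.Icc (0:ℝ) 1 ∧
    r = |∫ x in S, ∫ y in T, U x y| }

/-- An invertible measure preserving map of `[0,1]` onto itself. -/
def IsInvMeasurePreserving (φ : ℝ → ℝ) : Prop :=
  Set.MapsTo φ (Set.Icc (0:ℝ) 1) (Set.Icc (0:ℝ) 1) ∧
  MeasureTheory.MeasurePreserving φ μ01 μ01 ∧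
  ∃ ψ : ℝ → ℝ, Set.MapsTo ψ (Set.Icc (0:ℝ) 1) (Set.Icc (0:ℝ) 1) ∧
    MeasureTheory.MeasurePreserving ψ μ01 μ01 ∧
    (∀ x ∈ Set.Icc (0:ℝ) 1, ψ (φ x) = x) ∧ (∀ x ∈ Set.Icc (0:ℝ) 1, φ (ψ x) = x)

/-- The cut distance `δ_□(U,W)` between two graphons. -/
noncomputable def cutDist (U W : ℝ → ℝ → ℝ) : ℝ :=
  sInf { r : ℝ | ∃ φ : ℝ → ℝ, IsInvMeasurePreserving φ ∧
    r = cutNorm (fun x y => U x y - W (φ x) (φ y)) }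

open scoped BigOperators

namespace ACL

lemma expect_update {ι α : Type*} [Fintype ι] [DecidableEq ι] [Fintype α] [Nonempty α] (j : ι)
    (f : (ι → α) → ℝ) :
    Finset.expect Finset.univ f
      = 𝔼 X : ι → α, 𝔼 z : α, f (Function.update X j z) := by
  rw [← Finset.expect_product' (f := fun (X : ι → α) z => f (Function.update X j z)),
    Finset.univ_product_univ]
  have h1 : Finset.expect Finset.univ f = 𝔼 p : (ι → α) × α, f p.1 := by
    rw [← Finset.univ_product_univ, Finset.expect_product]
    simp
  rw [h1]
  have inv : Function.Involutive
      (fun p : (ι → α) × α => ((Function.update p.1 j p.2, p.1 j) : (ι → α) × α)) := by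
    intro p
    simp
  refine Fintype.expect_equiv inv.toPerm _ _ ?_
  intro p
  simp [Function.Involutive.toPerm]

/-- replace coordinates in `J` of `X` by those of `Z` -/
def mix {ι α : Type*} [DecidableEq ι] (J : Finset ι) (X Z : ι → α) : ι → α :=
  fun u => if u ∈ J then Z u else X u

lemma expect_mix {ι α : Type*} [Fintype ι] [DecidableEq ι] [Fintype α] [Nonempty α] (J : Finset ι)
    (f : (ι → α) → ℝ) :
    Finset.expect Finset.univ f = 𝔼 Z : ι → α, 𝔼 X : ι → α, f (mix J X Z) := by
  rw [Finset.expect_comm]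
  rw [← Finset.expect_product' (f := fun (X : ι → α) Z => f (mix J X Z)),
    Finset.univ_product_univ]
  have h1 : Finset.expect Finset.univ f = 𝔼 p : (ι → α) × (ι → α), f p.1 := by
    rw [← Finset.univ_product_univ, Finset.expect_product]
    simp
  rw [h1]
  have inv : Function.Involutive
      (fun p : (ι → α) × (ι → α) => ((mix J p.1 p.2, mix J p.2 p.1) : (ι → α) × (ι → α))) := by
    intro p
    ext u <;> simp [mix] <;> split_ifs <;> rfl
  refine Fintype.expect_equiv inv.toPerm _ _ ?_
  rintro ⟨X, Z⟩
  simp only [Function.Involutive.toPerm, Equiv.coe_fn_mk]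
  congr 1
  ext u; simp [mix]; split_ifs <;> rfl

lemma expect_eval {ι α : Type*} [Fintype ι] [DecidableEq ι] [Fintype α] [Nonempty α] (j : ι)
    (f : α → ℝ) : 𝔼 X : ι → α, f (X j) = 𝔼 z, f z := by
  rw [expect_update j]; simp

lemma var_lemma {ι α : Type*} [Fintype ι] [DecidableEq ι] [Fintype α] [Nonempty α] (c : α → ℝ) :
    𝔼 Q : ι → α, (∑ j, c (Q j) - Fintype.card ι * 𝔼 x, c x) ^ 2
      ≤ Fintype.card ι * 𝔼 x, c x ^ 2 := by
  set m := 𝔼 x, c x with hm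
  have h0 : 𝔼 x, (c x - m) = 0 := by
    rw [Finset.expect_sub_distrib, ← hm]; simp
  have h1 : ∀ Q : ι → α, (∑ j, c (Q j) - Fintype.card ι * m) ^ 2
      = ∑ j, ∑ l, (c (Q j) - m) * (c (Q l) - m) := by
    intro Q
    rw [← Finset.sum_mul_sum, ← sq]
    simp
  have h2 : ∀ j l : ι, 𝔼 Q : ι → α, (c (Q j) - m) * (c (Q l) - m)
      = if j = l then 𝔼 x, (c x - m) ^ 2 else 0 := by
    intro j l
    split_ifs with h
    · subst h
      simp_rw [← sq]
      exact expect_eval j (fun x => (c x - m) ^ 2)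
    · rw [expect_update j]
      apply Finset.expect_eq_zero
      intro X _
      simp only [Function.update_self, Function.update_of_ne (Ne.symm h)]
      rw [← Finset.expect_mul, h0, zero_mul]
  have h3 : 𝔼 x, (c x - m) ^ 2 ≤ 𝔼 x, c x ^ 2 := by
    have : ∀ x, (c x - m) ^ 2 = c x ^ 2 - 2 * m * (c x - m) - m ^ 2 := fun x => by ring
    simp_rw [this]
    rw [Finset.expect_sub_distrib, Finset.expect_sub_distrib, ← Finset.mul_expect, h0]
    simp
    positivity
  simp_rw [h1]
  rw [Finset.expect_sum_comm]
  simp_rw [Finset.expect_sum_comm, h2]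
  simp
  gcongr

lemma expect_abs_le_of_sq {α : Type*} [Fintype α] [Nonempty α] (f : α → ℝ) (c : ℝ) (hc : 0 ≤ c)
    (h : 𝔼 x, f x ^ 2 ≤ c ^ 2) : 𝔼 x, |f x| ≤ c := by
  have := Finset.expect_mul_sq_le_sq_mul_sq Finset.univ (fun x => |f x|) (fun _ => (1:ℝ))
  simp at this
  exact abs_le_of_sq_le_sq' (this.trans h) hc |>.2

lemma mixvar {ι α : Type*} [Fintype ι] [DecidableEq ι] [Fintype α] [Nonempty α]
    (J : Finset ι) (h : (ι → α) → α → ℝ) (K : ℝ) (hK : ∀ X x, |h X x| ≤ K)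
    (hJ : ∀ X X' : ι → α, (∀ j ∈ J, X j = X' j) → h X = h X') :
    𝔼 X : ι → α, |∑ u, h X (X u) - Fintype.card ι * 𝔼 x, h X x|
      ≤ K * √(Fintype.card ι) + 2 * K * J.card := by
  obtain ⟨x0⟩ := (inferInstance : Nonempty α)
  have hK0 : 0 ≤ K := (abs_nonneg _).trans (hK (fun _ => x0) x0)
  rw [expect_mix J]
  refine Finset.expect_le Finset.univ_nonempty ?_
  intro Z _
  have e : ∀ X, h (mix J X Z) = h Z := fun X => hJ _ _ (fun j hj => by simp [mix, hj])
  have key : ∀ X : ι → α,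
      |∑ u, h (mix J X Z) (mix J X Z u) - Fintype.card ι * 𝔼 x, h (mix J X Z) x|
      ≤ |∑ u, h Z (X u) - Fintype.card ι * 𝔼 x, h Z x| + 2 * K * J.card := by
    intro X
    simp only [e]
    have h2 : |∑ u, (h Z (mix J X Z u) - h Z (X u))| ≤ 2 * K * J.card := by
      refine (Finset.abs_sum_le_sum_abs _ _).trans ?_
      have : ∀ u, |h Z (mix J X Z u) - h Z (X u)| ≤ if u ∈ J then 2 * K else 0 := by
        intro u
        split_ifs with hu
        · have := abs_sub (h Z (mix J X Z u)) (h Z (X u))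
          linarith [hK Z (mix J X Z u), hK Z (X u)]
        · simp [mix, hu]
      refine (Finset.sum_le_sum fun u _ => this u).trans ?_
      simp [mul_comm]
    rw [Finset.sum_sub_distrib] at h2
    have := abs_add_le (∑ u, h Z (mix J X Z u) - ∑ u, h Z (X u))
      (∑ u, h Z (X u) - Fintype.card ι * 𝔼 x, h Z x)
    rw [sub_add_sub_cancel] at this
    linarith
  refine (Finset.expect_le_expect fun X _ => key X).trans ?_
  rw [Finset.expect_add_distrib, Fintype.expect_const]
  gcongr
  apply expect_abs_le_of_sq _ _ (by positivity)
  refine (var_lemma _).trans ?_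
  rw [mul_pow, Real.sq_sqrt (by positivity), mul_comm]
  gcongr
  refine Finset.expect_le Finset.univ_nonempty ?_
  intro x _
  rw [← sq_abs]
  gcongr
  exact hK _ _

end ACL

namespace ACL

lemma afkk {ι : Type*} [Fintype ι] [DecidableEq ι] [Nonempty ι] (B : ι → ι → ℝ) (q : ℕ) (hq : 0 < q)
    (S T : Finset ι) :
    ∑ u ∈ S, ∑ v ∈ T, B u v ≤
      (𝔼 Q : Fin q → ι, ∑ u with 0 < ∑ j with Q j ∈ T, B u (Q j), ∑ v ∈ T, B u v)
      + (∑ u, ∑ v, B u v ^ 2 + (Fintype.card ι : ℝ) ^ 2) / (2 * √q) := by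
  classical
  set k : ℝ := (Fintype.card ι : ℝ) with hk
  have hk0 : 0 < k := by rw [hk]; exact_mod_cast Fintype.card_pos
  have hq0 : (0:ℝ) < q := by exact_mod_cast hq
  have hsq : 0 < √(q:ℝ) := Real.sqrt_pos.2 hq0
  have hss : √(q:ℝ) * √(q:ℝ) = q := Real.mul_self_sqrt hq0.le
  set b : ι → ℝ := fun u => ∑ v ∈ T, B u v with hb
  set c : ι → ι → ℝ := fun u v => if v ∈ T then B u v else 0 with hc
  have hcm : ∀ u, k * 𝔼 v, c u v = b u := by
    intro u
    rw [hk, Fintype.card_mul_expect]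
    simp [hc, hb, Finset.sum_ite_mem]
  -- deviation
  set y : (Fin q → ι) → ι → ℝ := fun Q u => b u - k / q * ∑ j, c u (Q j) with hy
  have hpt : ∀ Q : Fin q → ι, ∑ u ∈ S, b u ≤
      ∑ u with 0 < ∑ j with Q j ∈ T, B u (Q j), b u + ∑ u, |y Q u| := by
    intro Q
    rw [← Finset.sum_filter_add_sum_filter_not Finset.univ (fun u => u ∈ S) ]
    have e1 : ∑ u ∈ S, b u = ∑ u, if u ∈ S then b u else 0 := by
      simp [Finset.sum_ite_mem]
    rw [e1, Finset.sum_filter, Finset.sum_filter_add_sum_filter_not, ← Finset.sum_add_distrib]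
    refine Finset.sum_le_sum fun u _ => ?_
    have e2 : ∑ j with Q j ∈ T, B u (Q j) = ∑ j, c u (Q j) := by
      simp [hc, Finset.sum_filter]
    rw [e2]
    have h1 := le_abs_self (y Q u)
    have h2 := neg_abs_le (y Q u)
    have h3 : 0 < k / q := by positivity
    simp only [hy] at h1 h2 ⊢
    split_ifs with h4 h5 h5
    · linarith [abs_nonneg (b u - k / q * ∑ j, c u (Q j))]
    · push Not at h5
      have := mul_nonpos_of_nonneg_of_nonpos h3.le h5
      linarith
    · have := mul_pos h3 h5
      linarith
    · linarith [abs_nonneg (b u - k / q * ∑ j, c u (Q j))]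
  have hE : ∀ u, 𝔼 Q : Fin q → ι, |y Q u| ≤ (∑ v, B u v ^ 2 + k) / (2 * √q) := by
    intro u
    have hv := var_lemma (ι := Fin q) (c u)
    have hyy : ∀ Q : Fin q → ι, |y Q u| ≤
        (∑ j, c u (Q j) - Fintype.card (Fin q) * 𝔼 x, c u x) ^ 2 * (k / (2 * q * √q))
          + k / (2 * √q) := by
      intro Q
      have e3 : y Q u = - (k / q) * (∑ j, c u (Q j) - Fintype.card (Fin q) * 𝔼 x, c u x) := by
        simp only [hy, ← hcm u, Fintype.card_fin]
        field_simp
        ring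
      set w := (∑ j, c u (Q j) - Fintype.card (Fin q) * 𝔼 x, c u x) with hw
      rw [e3, abs_mul, abs_neg, abs_of_pos (show 0 < k / q by positivity)]
      have h1 : |w| * √q * 2 ≤ w ^ 2 + q := by
        have := sq_nonneg (|w| - √q)
        have h5 := sq_abs w
        nlinarith
      have h2 : k / q * |w| = (|w| * √q * 2) * (k / (2 * q * √q)) := by field_simp
      have h3 : k / (2 * √q) = q * (k / (2 * q * √q)) := by field_simp
      rw [h2, h3, ← add_mul]
      gcongr
    refine (Finset.expect_le_expect fun Q _ => hyy Q).trans ?_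
    rw [Finset.expect_add_distrib, Fintype.expect_const, ← Finset.expect_mul]
    have h4 : Fintype.card (Fin q) * 𝔼 x, c u x ^ 2 ≤ q * ((∑ v, B u v ^ 2) / k) := by
      rw [Fintype.card_fin, Fintype.expect_eq_sum_div_card]
      have h8 : ∑ v, c u v ^ 2 ≤ ∑ v, B u v ^ 2 := by
        refine Finset.sum_le_sum fun v _ => ?_
        simp only [hc]
        split_ifs
        · exact le_rfl
        · simp; positivity
      gcongr
    have h5 := hv.trans h4
    have h6 : (∑ v, B u v ^ 2 + k) / (2 * √q) =
      q * ((∑ v, B u v ^ 2) / k) * (k / (2 * q * √q)) + k / (2 * √q) := by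
      field_simp
    rw [h6]
    gcongr
  have h7 : ∑ u ∈ S, b u ≤ 𝔼 Q : Fin q → ι,
      (∑ u with 0 < ∑ j with Q j ∈ T, B u (Q j), b u + ∑ u, |y Q u|) :=
    Finset.le_expect Finset.univ_nonempty fun Q _ => hpt Q
  rw [Finset.expect_add_distrib, Finset.expect_sum_comm] at h7
  refine h7.trans ?_
  gcongr
  refine (Finset.sum_le_sum fun u _ => hE u).trans ?_
  rw [← Finset.sum_div, Finset.sum_add_distrib]
  simp [hk, sq]

lemma samp_one {ι α : Type*} [Fintype ι] [DecidableEq ι] [Nonempty ι] [Fintype α] [DecidableEq α]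
    [Nonempty α]
    (U : α → α → ℝ) (K ε : ℝ) (hK : ∀ x y, |U x y| ≤ K)
    (hcut : ∀ S T : Finset α, ∑ x ∈ S, ∑ y ∈ T, U x y ≤ ε * (Fintype.card α : ℝ) ^ 2)
    (q : ℕ) (hq : 0 < q) :
    ∃ Ψ : (ι → α) → ℝ, (∀ X, 0 ≤ Ψ X) ∧
      (∀ X S T, ∑ u ∈ S, ∑ v ∈ T, U (X u) (X v) ≤
        ε * (Fintype.card ι : ℝ) ^ 2 + Ψ X
          + (∑ u, ∑ v, U (X u) (X v) ^ 2 + (Fintype.card ι : ℝ) ^ 2) / (2 * √q)) ∧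
      𝔼 X, Ψ X ≤ 2 ^ q * (Fintype.card ι * (K * (2 * √(Fintype.card ι) + 4 * (q + 1)))) := by
  classical
  set k : ℝ := (Fintype.card ι : ℝ) with hk
  have hk0 : 0 < k := by rw [hk]; exact_mod_cast Fintype.card_pos
  have hN0 : (0:ℝ) < Fintype.card α := by exact_mod_cast Fintype.card_pos
  obtain ⟨x0⟩ := (inferInstance : Nonempty α)
  have hK0 : 0 ≤ K := (abs_nonneg _).trans (hK x0 x0)
  let sv : Finset (Fin q) → (Fin q → α) → α → α → ℝ :=
    fun R y x z => if 0 < ∑ j ∈ R, U x (y j) then U x z else 0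
  have hsv : ∀ R y x z, |sv R y x z| ≤ K := by
    intro R y x z
    simp only [sv]
    split_ifs
    · exact hK _ _
    · simpa using hK0
  let g : Finset (Fin q) → (Fin q → α) → α → ℝ := fun R y z => 𝔼 x, sv R y x z
  have hg : ∀ R y z, |g R y z| ≤ K := by
    intro R y z
    exact (Finset.abs_expect_le _ _).trans
      (Finset.expect_le Finset.univ_nonempty fun x _ => hsv _ _ _ _)
  let gp : Finset (Fin q) → (Fin q → α) → α → ℝ := fun R y z => max (g R y z) 0
  have hgp : ∀ R y z, |gp R y z| ≤ K := by
    intro R y z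
    simp only [gp]
    rw [abs_of_nonneg (le_max_right _ _)]
    exact max_le ((le_abs_self _).trans (hg _ _ _)) hK0
  have hgpm : ∀ R y, 𝔼 z, gp R y z ≤ ε := by
    intro R y
    have h1 : ∑ z, gp R y z = (∑ x with 0 < ∑ j ∈ R, U x (y j), ∑ z with 0 < g R y z, U x z)
        / Fintype.card α := by
      have e1 : ∀ z, gp R y z = if 0 < g R y z then g R y z else 0 := by
        intro z
        simp only [gp]
        split_ifs with h
        · exact max_eq_left h.le
        · exact max_eq_right (not_lt.1 h)
      simp only [e1]
      rw [← Finset.sum_filter, Finset.sum_comm, Finset.sum_div]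
      refine Finset.sum_congr rfl fun z _ => ?_
      simp only [g, sv]
      rw [Fintype.expect_eq_sum_div_card, Finset.sum_filter]
    rw [Fintype.expect_eq_sum_div_card, h1, div_div, div_le_iff₀ (by positivity)]
    have := hcut (Finset.univ.filter fun x => 0 < ∑ j ∈ R, U x (y j))
      (Finset.univ.filter fun z => 0 < g R y z)
    rw [← sq]; exact this
  let D1 : (Fin q → ι) → Finset (Fin q) → (ι → α) → ι → ℝ := fun Q R X v =>
    |∑ u, sv R (X ∘ Q) (X u) (X v) - k * g R (X ∘ Q) (X v)|
  let D2 : (Fin q → ι) → Finset (Fin q) → (ι → α) → ℝ := fun Q R X =>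
    |∑ v, gp R (X ∘ Q) (X v) - k * 𝔼 z, gp R (X ∘ Q) z|
  let Ψ0 : (Fin q → ι) → Finset (Fin q) → (ι → α) → ℝ := fun Q R X =>
    ∑ v, D1 Q R X v + k * D2 Q R X
  have hΨ0 : ∀ Q R X, 0 ≤ Ψ0 Q R X := by
    intro Q R X
    simp only [Ψ0, D1, D2]
    positivity
  refine ⟨fun X => 𝔼 Q : Fin q → ι, ∑ R, Ψ0 Q R X, ?_, ?_, ?_⟩
  · intro X
    exact Finset.expect_nonneg fun Q _ => Finset.sum_nonneg fun R _ => hΨ0 _ _ _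
  · intro X S T
    refine (afkk (fun u v => U (X u) (X v)) q hq S T).trans ?_
    gcongr
    have hmain : ∀ Q : Fin q → ι,
        ∑ u with 0 < ∑ j with Q j ∈ T, U (X u) (X (Q j)), ∑ v ∈ T, U (X u) (X v)
        ≤ ε * k ^ 2 + ∑ R, Ψ0 Q R X := by
      intro Q
      set R : Finset (Fin q) := Finset.univ.filter fun j => Q j ∈ T with hR
      have h1 : ∑ u with 0 < ∑ j ∈ R, U (X u) (X (Q j)), ∑ v ∈ T, U (X u) (X v)
          = ∑ v ∈ T, ∑ u, sv R (X ∘ Q) (X u) (X v) := by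
        rw [Finset.sum_comm]
        refine Finset.sum_congr rfl fun v _ => ?_
        simp only [sv, Function.comp]
        rw [Finset.sum_filter]
      have h2 : ∑ v ∈ T, ∑ u, sv R (X ∘ Q) (X u) (X v)
          ≤ ∑ v ∈ T, (k * gp R (X ∘ Q) (X v) + D1 Q R X v) := by
        refine Finset.sum_le_sum fun v _ => ?_
        have := le_abs_self (∑ u, sv R (X ∘ Q) (X u) (X v) - k * g R (X ∘ Q) (X v))
        have h3 : k * g R (X ∘ Q) (X v) ≤ k * gp R (X ∘ Q) (X v) := by
          gcongr
          exact le_max_left _ _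
        simp only [D1]
        linarith
      have h4 : ∑ v ∈ T, (k * gp R (X ∘ Q) (X v) + D1 Q R X v)
          ≤ ∑ v, (k * gp R (X ∘ Q) (X v) + D1 Q R X v) := by
        refine Finset.sum_le_sum_of_subset_of_nonneg (Finset.subset_univ _) fun v _ _ => ?_
        have : 0 ≤ gp R (X ∘ Q) (X v) := le_max_right _ _
        simp only [D1]
        positivity
      have h5 : ∑ v, (k * gp R (X ∘ Q) (X v) + D1 Q R X v) ≤ ε * k ^ 2 + Ψ0 Q R X := by
        rw [Finset.sum_add_distrib, ← Finset.mul_sum]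
        have h6 := le_abs_self (∑ v, gp R (X ∘ Q) (X v) - k * 𝔼 z, gp R (X ∘ Q) z)
        have h7 := hgpm R (X ∘ Q)
        have h8 : ∑ v, gp R (X ∘ Q) (X v) ≤ k * ε + D2 Q R X := by
          have := mul_le_mul_of_nonneg_left h7 hk0.le
          simp only [D2]
          linarith
        have h9 := mul_le_mul_of_nonneg_left h8 hk0.le
        simp only [Ψ0]
        nlinarith
      have h10 : Ψ0 Q R X ≤ ∑ R, Ψ0 Q R X :=
        Finset.single_le_sum (f := fun R => Ψ0 Q R X) (fun R _ => hΨ0 Q R X) (Finset.mem_univ R)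
      linarith
    refine (Finset.expect_le_expect fun Q _ => hmain Q).trans ?_
    rw [Finset.expect_add_distrib, Fintype.expect_const]
  · rw [Finset.expect_comm]
    refine Finset.expect_le Finset.univ_nonempty fun Q _ => ?_
    rw [Finset.expect_sum_comm]
    have hb : ∀ R, 𝔼 X, Ψ0 Q R X ≤ k * (K * (2 * √k + 4 * (q + 1))) := by
      intro R
      have hQc : ((Finset.univ.image Q).card : ℝ) ≤ q := by
        have := Finset.card_image_le (s := Finset.univ) (f := Q)
        simp at this
        exact_mod_cast this
      have hD1 : ∀ v, 𝔼 X, D1 Q R X v ≤ K * √k + 2 * K * (q + 1) := by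
        intro v
        have := mixvar (insert v (Finset.univ.image Q))
          (fun X x => sv R (X ∘ Q) x (X v)) K (fun X x => hsv _ _ _ _) (by
            intro X X' h
            have e1 : X ∘ Q = X' ∘ Q := by
              ext j
              exact h _ (by simp)
            have e2 : X v = X' v := h _ (by simp)
            simp only [e1, e2])
        refine this.trans ?_
        gcongr
        have h3 := Finset.card_insert_le v (Finset.univ.image Q)
        have h4 : ((insert v (Finset.univ.image Q)).card : ℝ) ≤ (Finset.univ.image Q).card + 1 := by
          exact_mod_cast h3
        linarith
      have hD2 : 𝔼 X, D2 Q R X ≤ K * √k + 2 * K * q := by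
        have := mixvar (Finset.univ.image Q)
          (fun X x => gp R (X ∘ Q) x) K (fun X x => hgp _ _ _) (by
            intro X X' h
            have e1 : X ∘ Q = X' ∘ Q := by
              ext j
              exact h _ (by simp)
            simp only [e1])
        refine this.trans ?_
        gcongr
      simp only [Ψ0]
      rw [Finset.expect_add_distrib, Finset.expect_sum_comm, ← Finset.mul_expect]
      have h1 : ∑ v, 𝔼 X, D1 Q R X v ≤ k * (K * √k + 2 * K * (q + 1)) := by
        refine (Finset.sum_le_sum fun v _ => hD1 v).trans ?_
        rw [Finset.sum_const, Finset.card_univ, nsmul_eq_mul]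
      have h2 := mul_le_mul_of_nonneg_left hD2 hk0.le
      have h3 : 0 ≤ k * K := by positivity
      nlinarith
    refine (Finset.sum_le_sum fun R _ => hb R).trans ?_
    simp

/-- two-sided sampling bound -/
lemma samp {ι α : Type*} [Fintype ι] [DecidableEq ι] [Nonempty ι] [Fintype α] [DecidableEq α]
    [Nonempty α]
    (U : α → α → ℝ) (K ε : ℝ) (hK : ∀ x y, |U x y| ≤ K)
    (hcut : ∀ S T : Finset α, |∑ x ∈ S, ∑ y ∈ T, U x y| ≤ ε * (Fintype.card α : ℝ) ^ 2)
    (hL2 : ∑ x, ∑ y, U x y ^ 2 ≤ (Fintype.card α : ℝ) ^ 2)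
    (q : ℕ) (hq : 0 < q) :
    ∃ M : (ι → α) → ℝ,
      (∀ X S T, |∑ u ∈ S, ∑ v ∈ T, U (X u) (X v)| ≤ M X) ∧
      𝔼 X, M X ≤ (Fintype.card ι : ℝ) ^ 2 * (ε + 1 / √q)
        + 2 * (2 ^ q * (Fintype.card ι * (K * (2 * √(Fintype.card ι) + 4 * (q + 1)))))
        + Fintype.card ι * (K ^ 2 * (√(Fintype.card ι) + 1)) / √q := by
  obtain ⟨Ψ1, p1, h1, b1⟩ := samp_one (ι := ι) U K ε hK
    (fun S T => (le_abs_self _).trans (hcut S T)) q hq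
  obtain ⟨Ψ2, p2, h2, b2⟩ := samp_one (ι := ι) (fun x y => - U x y) K ε
    (fun x y => by simpa using hK x y)
    (fun S T => by simpa using (neg_le_abs _).trans (hcut S T)) q hq
  set k : ℝ := (Fintype.card ι : ℝ) with hk
  have hk0 : 0 < k := by rw [hk]; exact_mod_cast Fintype.card_pos
  have hN0 : (0:ℝ) < Fintype.card α := by exact_mod_cast Fintype.card_pos
  have hq0 : (0:ℝ) < q := by exact_mod_cast hq
  have hsq : 0 < √(q:ℝ) := Real.sqrt_pos.2 hq0
  have hU2 : ∀ x y, |U x y ^ 2| ≤ K ^ 2 := by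
    intro x y
    rw [abs_pow]
    gcongr
    exact hK x y
  have hF : 𝔼 X : ι → α, ∑ u, ∑ v, U (X u) (X v) ^ 2 ≤ k ^ 2 + 2 * k * (K ^ 2 * (√k + 1)) := by
    -- two applications of mixvar
    have a1 : ∀ v : ι, 𝔼 X : ι → α, |∑ u, U (X u) (X v) ^ 2 - k * 𝔼 x, U x (X v) ^ 2|
        ≤ K ^ 2 * √k + 2 * K ^ 2 * 1 := by
      intro v
      have := mixvar {v} (fun (X : ι → α) x => U x (X v) ^ 2) (K ^ 2) (fun X x => hU2 _ _)
        (by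
          intro X X' h
          have := h v (by simp)
          simp only [this])
      simpa using this
    have a2 : 𝔼 X : ι → α, ∑ v, 𝔼 x, U x (X v) ^ 2 ≤ k := by
      rw [Finset.expect_sum_comm]
      have : ∀ v : ι, 𝔼 X : ι → α, 𝔼 x, U x (X v) ^ 2 ≤ 1 := by
        intro v
        rw [expect_eval v (fun z => 𝔼 x, U x z ^ 2), Finset.expect_comm]
        simp_rw [Fintype.expect_eq_sum_div_card]
        rw [← Finset.sum_div, div_div, div_le_one (by positivity), ← sq]
        exact hL2
      refine (Finset.sum_le_sum fun v _ => this v).trans ?_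
      simp [hk]
    have a3 : ∀ X : ι → α, ∑ u, ∑ v, U (X u) (X v) ^ 2 ≤
        ∑ v, |∑ u, U (X u) (X v) ^ 2 - k * 𝔼 x, U x (X v) ^ 2|
        + k * ∑ v, 𝔼 x, U x (X v) ^ 2 := by
      intro X
      rw [Finset.sum_comm, Finset.mul_sum, ← Finset.sum_add_distrib]
      refine Finset.sum_le_sum fun v _ => ?_
      linarith [le_abs_self (∑ u, U (X u) (X v) ^ 2 - k * 𝔼 x, U x (X v) ^ 2)]
    refine (Finset.expect_le_expect fun X _ => a3 X).trans ?_
    rw [Finset.expect_add_distrib, Finset.expect_sum_comm, ← Finset.mul_expect]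
    have a4 := Finset.sum_le_sum fun v (_ : v ∈ Finset.univ) => a1 v
    simp only [Finset.sum_const, Finset.card_univ, nsmul_eq_mul, ← hk] at a4
    have a5 := mul_le_mul_of_nonneg_left a2 hk0.le
    have : 0 ≤ k * (K ^ 2 * √k) := by positivity
    nlinarith
  refine ⟨fun X => ε * k ^ 2 + Ψ1 X + Ψ2 X + (∑ u, ∑ v, U (X u) (X v) ^ 2 + k ^ 2) / (2 * √q),
    ?_, ?_⟩
  · intro X S T
    rw [abs_le]
    have g1 := h1 X S T
    have g2 := h2 X S T
    simp only [Finset.sum_neg_distrib, neg_sq] at g2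
    constructor
    · linarith [p1 X]
    · linarith [p2 X]
  · rw [Finset.expect_add_distrib, Finset.expect_add_distrib, Finset.expect_add_distrib,
      Fintype.expect_const, ← Finset.expect_div, Finset.expect_add_distrib, Fintype.expect_const]
    have : (𝔼 X : ι → α, ∑ u, ∑ v, U (X u) (X v) ^ 2 + k ^ 2) / (2 * √q)
        ≤ (k ^ 2 + 2 * k * (K ^ 2 * (√k + 1)) + k ^ 2) / (2 * √q) := by gcongr
    have e : (k ^ 2 + 2 * k * (K ^ 2 * (√k + 1)) + k ^ 2) / (2 * √q)
      = k ^ 2 * (1 / √q) + k * (K ^ 2 * (√k + 1)) / √q := by field_simp; ring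
    rw [e] at this
    linarith

end ACL

namespace ACL

set_option linter.unusedSimpArgs false

lemma fk_step {α : Type} [Fintype α] [DecidableEq α] [Nonempty α] (A : α → α → ℝ)
    (hA : ∀ x y, A x y ∈ Set.Icc (0:ℝ) 1) (ε : ℝ) (hε : 0 < ε) (t : ℕ) :
    ∃ (P : Type) (_ : Fintype P) (_ : DecidableEq P) (p : α → P) (F : P → P → ℝ),
      Fintype.card P = 4 ^ t ∧ (∀ i j, |F i j| ≤ t * ε) ∧
      (∑ x, ∑ y, (A x y - F (p x) (p y)) ^ 2 ≤ (Fintype.card α : ℝ) ^ 2) ∧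
      ((∀ S T : Finset α, |∑ x ∈ S, ∑ y ∈ T, (A x y - F (p x) (p y))|
          ≤ ε * (Fintype.card α : ℝ) ^ 2) ∨
        ∑ x, ∑ y, (A x y - F (p x) (p y)) ^ 2 ≤ (Fintype.card α : ℝ) ^ 2 * (1 - t * ε ^ 2)) := by
  set N : ℝ := (Fintype.card α : ℝ) with hN
  have hN0 : 0 < N := by rw [hN]; exact_mod_cast Fintype.card_pos
  induction t with
  | zero =>
    have h1 : ∑ x, ∑ y, (A x y - 0) ^ 2 ≤ N ^ 2 := by
      have : ∀ x y, (A x y - 0) ^ 2 ≤ 1 := by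
        intro x y
        have := hA x y
        rw [Set.mem_Icc] at this
        nlinarith
      refine (Finset.sum_le_sum fun x _ => Finset.sum_le_sum fun y _ => this x y).trans ?_
      simp [hN, sq]
    refine ⟨Unit, inferInstance, inferInstance, fun _ => (), fun _ _ => 0, by simp, by simp, h1,
      Or.inr ?_⟩
    simpa using h1
  | succ t ih =>
    obtain ⟨P, i1, i2, p, F, hc, hF, hL, h⟩ := ih
    by_cases hcut : ∀ S T : Finset α, |∑ x ∈ S, ∑ y ∈ T, (A x y - F (p x) (p y))| ≤ ε * N ^ 2
    · refine ⟨P × Bool × Bool, inferInstance, inferInstance, fun x => (p x, true, true),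
        fun i j => F i.1 j.1, ?_, ?_, hL, Or.inl hcut⟩
      · simp [hc]; ring
      · intro i j
        refine (hF _ _).trans ?_
        push_cast
        nlinarith
    · have hE := h.resolve_left hcut
      push Not at hcut
      obtain ⟨S, T, hST⟩ := hcut
      set g := ∑ x ∈ S, ∑ y ∈ T, (A x y - F (p x) (p y)) with hg
      obtain ⟨c, hc1, hc2⟩ : ∃ c : ℝ, |c| = ε ∧ ε * (ε * N ^ 2) ≤ c * g := by
        rcases le_total 0 g with h0 | h0
        · refine ⟨ε, abs_of_pos hε, ?_⟩
          rw [abs_of_nonneg h0] at hST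
          gcongr
        · refine ⟨-ε, by rw [abs_neg, abs_of_pos hε], ?_⟩
          rw [abs_of_nonpos h0] at hST
          nlinarith
      have key : ∑ x, ∑ y, (A x y - (F (p x) (p y) + if x ∈ S ∧ y ∈ T then c else 0)) ^ 2
          ≤ ∑ x, ∑ y, (A x y - F (p x) (p y)) ^ 2 - N ^ 2 * ε ^ 2 := by
        have e1 : ∀ x y, (A x y - (F (p x) (p y) + if x ∈ S ∧ y ∈ T then c else 0)) ^ 2
            ≤ (A x y - F (p x) (p y)) ^ 2
              - 2 * c * (if x ∈ S then (if y ∈ T then (A x y - F (p x) (p y)) else 0) else 0)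
              + ε ^ 2 := by
          intro x y
          have hcc : c ^ 2 = ε ^ 2 := by rw [← hc1, sq_abs]
          by_cases h1 : x ∈ S <;> by_cases h2 : y ∈ T <;> simp [h1, h2] <;> nlinarith
        refine (Finset.sum_le_sum fun x _ => Finset.sum_le_sum fun y _ => e1 x y).trans ?_
        have e2 : ∑ x, ∑ y, (if x ∈ S then (if y ∈ T then (A x y - F (p x) (p y)) else 0) else 0)
            = g := by
          have e3 : ∀ x, ∑ y, (if x ∈ S then (if y ∈ T then (A x y - F (p x) (p y)) else 0) else 0)
              = if x ∈ S then ∑ y ∈ T, (A x y - F (p x) (p y)) else 0 := by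
            intro x
            split_ifs
            · simp [Finset.sum_ite_mem]
            · simp
          simp only [e3, hg]
          simp [Finset.sum_ite_mem]
        simp only [Finset.sum_add_distrib, Finset.sum_sub_distrib, ← Finset.mul_sum, e2]
        simp only [Finset.sum_const, Finset.card_univ, nsmul_eq_mul, ← hN]
        nlinarith
      refine ⟨P × Bool × Bool, inferInstance, inferInstance,
        fun x => (p x, decide (x ∈ S), decide (x ∈ T)),
        fun i j => F i.1 j.1 + if i.2.1 = true ∧ j.2.2 = true then c else 0, ?_, ?_, ?_, Or.inr ?_⟩
      · simp [hc]; ring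
      · intro i j
        refine (abs_add_le _ _).trans ?_
        have : |(if i.2.1 = true ∧ j.2.2 = true then c else 0)| ≤ ε := by
          split_ifs
          · exact hc1.le
          · simpa using hε.le
        push_cast
        linarith [hF i.1 j.1]
      · simp only [decide_eq_true_eq]
        nlinarith [sq_nonneg (N * ε)]
      · simp only [decide_eq_true_eq]
        push_cast
        linarith

lemma fk {α : Type} [Fintype α] [DecidableEq α] [Nonempty α] (A : α → α → ℝ)
    (hA : ∀ x y, A x y ∈ Set.Icc (0:ℝ) 1) (r : ℕ) (hr : 0 < r) :
    ∃ (P : Type) (_ : Fintype P) (_ : DecidableEq P) (p : α → P) (F : P → P → ℝ),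
      Fintype.card P = 4 ^ r ∧ (∀ i j, |F i j| ≤ √r) ∧
      (∑ x, ∑ y, (A x y - F (p x) (p y)) ^ 2 ≤ (Fintype.card α : ℝ) ^ 2) ∧
      (∀ S T : Finset α, |∑ x ∈ S, ∑ y ∈ T, (A x y - F (p x) (p y))|
          ≤ 1 / √r * (Fintype.card α : ℝ) ^ 2) := by
  have hr0 : (0:ℝ) < r := by exact_mod_cast hr
  have hsr : 0 < √(r:ℝ) := Real.sqrt_pos.2 hr0
  have hss : √(r:ℝ) * √(r:ℝ) = r := Real.mul_self_sqrt hr0.le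
  obtain ⟨P, i1, i2, p, F, hc, hF, hL, h⟩ := fk_step A hA (1 / √r) (by positivity) r
  refine ⟨P, i1, i2, p, F, hc, ?_, hL, ?_⟩
  · intro i j
    refine (hF i j).trans (le_of_eq ?_)
    rw [mul_one_div, div_eq_iff hsr.ne', hss]
  · rcases h with h | h
    · exact h
    · have e : (r:ℝ) * (1 / √r) ^ 2 = 1 := by
        rw [div_pow, Real.sq_sqrt hr0.le]; field_simp
      rw [e, sub_self, mul_zero] at h
      have h0 : ∀ x y, A x y - F (p x) (p y) = 0 := by
        intro x y
        have h1 : (A x y - F (p x) (p y)) ^ 2 ≤ ∑ x, ∑ y, (A x y - F (p x) (p y)) ^ 2 := by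
          refine le_trans ?_ (Finset.single_le_sum
            (f := fun x => ∑ y, (A x y - F (p x) (p y)) ^ 2)
            (fun x _ => Finset.sum_nonneg fun y _ => sq_nonneg _) (Finset.mem_univ x))
          exact Finset.single_le_sum (f := fun y => (A x y - F (p x) (p y)) ^ 2)
            (fun y _ => sq_nonneg _) (Finset.mem_univ y)
        have h2 : (A x y - F (p x) (p y)) ^ 2 = 0 := le_antisymm (h1.trans h) (sq_nonneg _)
        exact pow_eq_zero_iff (two_ne_zero) |>.1 h2
      intro S T
      simp only [h0]
      simp
      positivity

/-- pairs `u < v` -/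
def Ek (k : ℕ) : Finset (Fin k × Fin k) := Finset.univ.filter fun p => p.1 < p.2

/-- adjacency matrix of the graph with edge set `s` -/
noncomputable def Gm {k : ℕ} (s : Finset (Fin k × Fin k)) (u v : Fin k) : ℝ :=
  if (u, v) ∈ s ∨ (v, u) ∈ s then 1 else 0

/-- probability weight of the edge set `s` -/
noncomputable def wt {k : ℕ} (a : Fin k → Fin k → ℝ) (s : Finset (Fin k × Fin k)) : ℝ :=
  (∏ p ∈ s, a p.1 p.2) * ∏ p ∈ Ek k \ s, (1 - a p.1 p.2)

lemma wt_sum {k : ℕ} (a : Fin k → Fin k → ℝ) : ∑ s ∈ (Ek k).powerset, wt a s = 1 := by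
  unfold wt
  rw [← Finset.prod_add]
  simp

lemma wt_nonneg {k : ℕ} (a : Fin k → Fin k → ℝ) (ha : ∀ u v, a u v ∈ Set.Icc (0:ℝ) 1)
    (s : Finset (Fin k × Fin k)) : 0 ≤ wt a s := by
  unfold wt
  apply mul_nonneg
  · exact Finset.prod_nonneg fun p _ => (ha _ _).1
  · exact Finset.prod_nonneg fun p _ => sub_nonneg.2 (ha _ _).2

lemma wt_zero {k : ℕ} (a : Fin k → Fin k → ℝ) (e : Fin k × Fin k) (he : e ∈ Ek k)
    (Y : Finset (Fin k × Fin k) → ℝ) (hY : ∀ t, Y (insert e t) = Y t) :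
    ∑ s ∈ (Ek k).powerset, wt a s * (((if e ∈ s then 1 else 0) - a e.1 e.2) * Y s) = 0 := by
  have hE : Ek k = insert e ((Ek k).erase e) := (Finset.insert_erase he).symm
  have hps : ∀ f : Finset (Fin k × Fin k) → ℝ, ∑ s ∈ (Ek k).powerset, f s =
      ∑ s ∈ ((Ek k).erase e).powerset, (f s + f (insert e s)) := by
    intro f
    conv_lhs => rw [hE]
    rw [Finset.sum_powerset_insert (Finset.notMem_erase _ _), Finset.sum_add_distrib]
  rw [hps]
  apply Finset.sum_eq_zero
  intro t ht
  have het : e ∉ t := fun h => Finset.notMem_erase e _ (Finset.mem_powerset.1 ht h)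
  have h1 : wt a (insert e t) = a e.1 e.2 *
      ((∏ p ∈ t, a p.1 p.2) * ∏ p ∈ Ek k \ insert e t, (1 - a p.1 p.2)) := by
    unfold wt
    rw [Finset.prod_insert het, mul_assoc]
  have h2 : wt a t = (1 - a e.1 e.2) *
      ((∏ p ∈ t, a p.1 p.2) * ∏ p ∈ Ek k \ insert e t, (1 - a p.1 p.2)) := by
    unfold wt
    have : Ek k \ t = insert e (Ek k \ insert e t) := by
      ext x
      simp only [Finset.mem_sdiff, Finset.mem_insert]
      constructor
      · rintro ⟨h3, h4⟩
        by_cases hx : x = e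
        · exact Or.inl hx
        · exact Or.inr ⟨h3, by simp [hx, h4]⟩
      · rintro (h3 | ⟨h3, h4⟩)
        · subst h3; exact ⟨he, het⟩
        · exact ⟨h3, fun h => h4 (Or.inr h)⟩
    rw [this, Finset.prod_insert (by simp)]
    ring
  rw [h1, h2, hY]
  simp [het]
  ring

lemma noise {k : ℕ} (hk : 0 < k) (a : Fin k → Fin k → ℝ) (ha : ∀ u v, a u v ∈ Set.Icc (0:ℝ) 1)
    (hs : ∀ u v, a u v = a v u) (lam : ℝ) (hl : 0 < lam) :
    ∃ M : Finset (Fin k × Fin k) → ℝ,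
      (∀ s S T, |∑ u ∈ S, ∑ v ∈ T, (if u = v then 0 else Gm s u v - a u v)| ≤ M s) ∧
      ∑ s ∈ (Ek k).powerset, wt a s * M s ≤ k ^ 2 * lam + 2 * k / lam ^ 3 := by
  set Z : Finset (Fin k × Fin k) → Fin k → Fin k → ℝ :=
    fun s u v => if u = v then 0 else Gm s u v - a u v with hZ
  have hk0 : (0:ℝ) < k := by exact_mod_cast hk
  have hZ1 : ∀ s u v, |Z s u v| ≤ 1 := by
    intro s u v
    have := ha u v
    rw [Set.mem_Icc] at this
    simp only [hZ, Gm]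
    split_ifs <;> rw [abs_le] <;> constructor <;> linarith
  have hZd : ∀ s u, Z s u u = 0 := by intro s u; simp [hZ]
  set Y : Finset (Fin k × Fin k) → ℝ := fun s => ∑ v, ∑ v', (∑ u, Z s u v * Z s u v') ^ 2 with hY
  have hYE : ∑ s ∈ (Ek k).powerset, wt a s * Y s ≤ 2 * (k:ℝ) ^ 3 := by
    have hterm : ∀ v v' u u' : Fin k, ∑ s ∈ (Ek k).powerset,
        wt a s * ((Z s u v * Z s u v') * (Z s u' v * Z s u' v'))
        ≤ (if u = u' then 1 else 0) + (if v = v' then 1 else 0) := by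
      intro v v' u u'
      by_cases hdeg : u = u' ∨ v = v'
      · have h1 : (1:ℝ) ≤ (if u = u' then 1 else 0) + (if v = v' then 1 else 0) := by
          rcases hdeg with h | h
          · rw [if_pos h]; split_ifs <;> norm_num
          · rw [if_pos h]; split_ifs <;> norm_num
        refine le_trans ?_ h1
        rw [← wt_sum a]
        refine Finset.sum_le_sum fun s _ => ?_
        have h2 : (Z s u v * Z s u v') * (Z s u' v * Z s u' v') ≤ 1 := by
          refine (le_abs_self _).trans ?_
          rw [abs_mul, abs_mul, abs_mul]
          have := mul_le_one₀ (hZ1 s u v) (abs_nonneg _) (hZ1 s u v')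
          have h3 := mul_le_one₀ (hZ1 s u' v) (abs_nonneg _) (hZ1 s u' v')
          exact mul_le_one₀ this (by positivity) h3
        have := mul_le_mul_of_nonneg_left h2 (wt_nonneg a ha s)
        linarith
      · push Not at hdeg
        obtain ⟨huu, hvv⟩ := hdeg
        rw [if_neg huu, if_neg hvv, add_zero]
        apply le_of_eq
        by_cases c1 : u = v
        · subst c1; simp [hZd]
        by_cases c2 : u = v'
        · subst c2; simp [hZd]
        by_cases c3 : u' = v
        · subst c3; simp [hZd]
        by_cases c4 : u' = v'
        · subst c4; simp [hZd]
        rcases lt_or_gt_of_ne c1 with hlt | hlt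
        · have hz := wt_zero a (u, v) (by simp [Ek, hlt])
            (fun s => Z s u v' * (Z s u' v * Z s u' v')) (by
              intro t
              simp [hZ, Gm, Finset.mem_insert, Prod.ext_iff, c1, c2, c3, c4, huu, hvv,
                Ne.symm huu, Ne.symm hvv, Ne.symm c1, Ne.symm c2, Ne.symm c3, Ne.symm c4])
          rw [← hz]
          refine Finset.sum_congr rfl fun s hs' => ?_
          have : (v, u) ∉ s := by
            intro h
            have := Finset.mem_powerset.1 hs' h
            simp [Ek] at this
            exact absurd this (not_lt.2 hlt.le)
          have e : Z s u v = (if (u, v) ∈ s then 1 else 0) - a u v := by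
            simp [hZ, Gm, c1, this]
          rw [e]
          ring
        · have hz := wt_zero a (v, u) (by simp [Ek, hlt])
            (fun s => Z s u v' * (Z s u' v * Z s u' v')) (by
              intro t
              simp [hZ, Gm, Finset.mem_insert, Prod.ext_iff, c1, c2, c3, c4, huu, hvv,
                Ne.symm huu, Ne.symm hvv, Ne.symm c1, Ne.symm c2, Ne.symm c3, Ne.symm c4])
          rw [← hz]
          refine Finset.sum_congr rfl fun s hs' => ?_
          have : (u, v) ∉ s := by
            intro h
            have := Finset.mem_powerset.1 hs' h
            simp [Ek] at this
            exact absurd this (not_lt.2 hlt.le)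
          have e : Z s u v = (if (v, u) ∈ s then 1 else 0) - a v u := by
            simp [hZ, Gm, c1, this, hs v u]
          rw [e]
          ring
    have e1 : ∀ s, Y s = ∑ v, ∑ v', ∑ u, ∑ u', (Z s u v * Z s u v') * (Z s u' v * Z s u' v') := by
      intro s
      simp only [hY]
      refine Finset.sum_congr rfl fun v _ => Finset.sum_congr rfl fun v' _ => ?_
      rw [sq, Finset.sum_mul_sum]
    have e2 : ∑ s ∈ (Ek k).powerset, wt a s * Y s = ∑ v, ∑ v', ∑ u, ∑ u',
        ∑ s ∈ (Ek k).powerset, wt a s * ((Z s u v * Z s u v') * (Z s u' v * Z s u' v')) := by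
      simp only [e1, Finset.mul_sum]
      rw [Finset.sum_comm]
      refine Finset.sum_congr rfl fun v _ => ?_
      rw [Finset.sum_comm]
      refine Finset.sum_congr rfl fun v' _ => ?_
      rw [Finset.sum_comm]
      refine Finset.sum_congr rfl fun u _ => ?_
      rw [Finset.sum_comm]
    rw [e2]
    refine (Finset.sum_le_sum fun v _ => Finset.sum_le_sum fun v' _ => Finset.sum_le_sum fun u _ =>
      Finset.sum_le_sum fun u' _ => hterm v v' u u').trans ?_
    simp [Finset.sum_add_distrib]
    apply le_of_eq
    ring
  have hC : ∀ s (S T : Finset (Fin k)), |∑ u ∈ S, ∑ v ∈ T, Z s u v| ^ 4 ≤ k ^ 4 * Y s := by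
    intro s S T
    have h1 : (∑ u ∈ S, ∑ v ∈ T, Z s u v) ^ 2 ≤ k * ∑ u, (∑ v ∈ T, Z s u v) ^ 2 := by
      refine sq_sum_le_card_mul_sum_sq.trans ?_
      have : (S.card : ℝ) ≤ k := by
        have := Finset.card_le_univ S
        simp at this
        exact_mod_cast this
      gcongr
      exact Finset.subset_univ _
    have h2 : ∑ u, (∑ v ∈ T, Z s u v) ^ 2 = ∑ v ∈ T, ∑ v' ∈ T, ∑ u, Z s u v * Z s u v' := by
      simp only [sq, Finset.sum_mul_sum]
      rw [Finset.sum_comm]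
      refine Finset.sum_congr rfl fun v _ => ?_
      rw [Finset.sum_comm]
    have hT : (T.card : ℝ) ≤ k := by
      have := Finset.card_le_univ T
      simp at this
      exact_mod_cast this
    have h3 : (∑ v ∈ T, ∑ v' ∈ T, ∑ u, Z s u v * Z s u v') ^ 2 ≤ k ^ 2 * Y s := by
      refine sq_sum_le_card_mul_sum_sq.trans ?_
      have h4 : ∀ v ∈ T, (∑ v' ∈ T, ∑ u, Z s u v * Z s u v') ^ 2 ≤
          k * ∑ v', (∑ u, Z s u v * Z s u v') ^ 2 := by
        intro v _
        refine sq_sum_le_card_mul_sum_sq.trans ?_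
        gcongr
        exact Finset.subset_univ _
      refine (mul_le_mul_of_nonneg_left (Finset.sum_le_sum h4) (by positivity)).trans ?_
      rw [← Finset.mul_sum, sq, mul_assoc]
      simp only [hY]
      gcongr
      exact Finset.subset_univ _
    have h0 : 0 ≤ ∑ u, (∑ v ∈ T, Z s u v) ^ 2 := by positivity
    have h5 : |∑ u ∈ S, ∑ v ∈ T, Z s u v| ^ 4 = ((∑ u ∈ S, ∑ v ∈ T, Z s u v) ^ 2) ^ 2 := by
      rw [← sq_abs (∑ u ∈ S, ∑ v ∈ T, Z s u v)]; ring
    rw [h5]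
    calc ((∑ u ∈ S, ∑ v ∈ T, Z s u v) ^ 2) ^ 2 ≤ (k * ∑ u, (∑ v ∈ T, Z s u v) ^ 2) ^ 2 := by
          gcongr
      _ = k ^ 2 * (∑ v ∈ T, ∑ v' ∈ T, ∑ u, Z s u v * Z s u v') ^ 2 := by rw [← h2]; ring
      _ ≤ k ^ 2 * (k ^ 2 * Y s) := by gcongr
      _ = k ^ 4 * Y s := by ring
  refine ⟨fun s => k ^ 2 * lam + Y s / (k ^ 2 * lam ^ 3), ?_, ?_⟩
  · intro s S T
    have h := hC s S T
    set C := |∑ u ∈ S, ∑ v ∈ T, Z s u v| with hCd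
    have hC0 : 0 ≤ C := abs_nonneg _
    have hY0 : 0 ≤ Y s := by simp only [hY]; positivity
    rcases le_total C (k ^ 2 * lam) with h1 | h1
    · have : 0 ≤ Y s / (k ^ 2 * lam ^ 3) := by positivity
      linarith
    · have h2 : C ≤ Y s / (k ^ 2 * lam ^ 3) := by
        rw [le_div_iff₀ (by positivity)]
        have h3 : (k ^ 2 * lam) ^ 3 ≤ C ^ 3 := by gcongr
        have h4 : C * (k ^ 2 * lam) ^ 3 ≤ k ^ 4 * Y s := by
          calc C * (k ^ 2 * lam) ^ 3 ≤ C * C ^ 3 := by gcongr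
            _ = C ^ 4 := by ring
            _ ≤ _ := h
        have h5 : (k:ℝ) ^ 4 * (C * (k ^ 2 * lam ^ 3)) ≤ k ^ 4 * Y s := by
          calc (k:ℝ) ^ 4 * (C * (k ^ 2 * lam ^ 3)) = C * (k ^ 2 * lam) ^ 3 := by ring
            _ ≤ _ := h4
        exact le_of_mul_le_mul_left h5 (by positivity)
      have : 0 ≤ (k:ℝ) ^ 2 * lam := by positivity
      linarith
  · simp only [mul_add, Finset.sum_add_distrib]
    rw [← Finset.sum_mul, wt_sum, one_mul]
    gcongr
    simp only [← mul_div_assoc]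
    rw [← Finset.sum_div, div_le_div_iff₀ (by positivity) (by positivity)]
    calc _ ≤ 2 * (k:ℝ) ^ 3 * lam ^ 3 := by gcongr
      _ = _ := by ring

end ACL

namespace ACL

lemma frac_one {ι : Type*} [Fintype ι] (D : ι → ι → ℝ) (δ c : ℝ) (hc : 0 ≤ c)
    (hD : ∀ S T : Finset ι, ∑ u ∈ S, ∑ v ∈ T, D u v ≤ δ) (s t : ι → ℝ)
    (hs : ∀ u, s u ∈ Set.Icc 0 c) (ht : ∀ u, t u ∈ Set.Icc 0 c) :
    ∑ u, ∑ v, s u * t v * D u v ≤ δ * c ^ 2 := by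
  classical
  have base : ∀ (s x : ι → ℝ), (∀ u, s u ∈ Set.Icc 0 c) →
      ∑ u, s u * x u ≤ c * ∑ u with 0 < x u, x u := by
    intro s x hs
    rw [Finset.mul_sum, Finset.sum_filter]
    refine Finset.sum_le_sum fun u _ => ?_
    have := hs u
    rw [Set.mem_Icc] at this
    split_ifs with h
    · nlinarith
    · push Not at h
      nlinarith
  have h1 : ∑ u, ∑ v, s u * t v * D u v = ∑ u, s u * ∑ v, t v * D u v := by
    simp only [Finset.mul_sum, mul_assoc]
  rw [h1]
  refine (base s _ hs).trans ?_
  set S := Finset.univ.filter fun u => 0 < ∑ v, t v * D u v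
  have h2 : ∑ u ∈ S, ∑ v, t v * D u v = ∑ v, t v * ∑ u ∈ S, D u v := by
    rw [Finset.sum_comm]
    simp only [Finset.mul_sum]
  rw [h2]
  have h3 := base t (fun v => ∑ u ∈ S, D u v) ht
  refine (mul_le_mul_of_nonneg_left h3 hc).trans ?_
  rw [Finset.sum_comm]
  have h4 := hD S (Finset.univ.filter fun v => 0 < ∑ u ∈ S, D u v)
  nlinarith [mul_le_mul_of_nonneg_left h4 (mul_nonneg hc hc)]

lemma frac {ι : Type*} [Fintype ι] (D : ι → ι → ℝ) (δ c : ℝ) (hc : 0 ≤ c)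
    (hD : ∀ S T : Finset ι, |∑ u ∈ S, ∑ v ∈ T, D u v| ≤ δ) (s t : ι → ℝ)
    (hs : ∀ u, s u ∈ Set.Icc 0 c) (ht : ∀ u, t u ∈ Set.Icc 0 c) :
    |∑ u, ∑ v, s u * t v * D u v| ≤ δ * c ^ 2 := by
  rw [abs_le']
  constructor
  · exact frac_one D δ c hc (fun S T => (le_abs_self _).trans (hD S T)) s t hs ht
  · have := frac_one (fun u v => - D u v) δ c hc
      (fun S T => by simpa using (neg_le_abs _).trans (hD S T)) s t hs ht
    simpa using this

lemma match_labels {α β P : Type*} [Fintype α] [Fintype β] [Fintype P] [DecidableEq α]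
    [DecidableEq β] [DecidableEq P]
    (hcard : Fintype.card α = Fintype.card β) (p : α → P) (l : β → P) :
    ∃ e : α ≃ β, ((Finset.univ.filter fun x => p x ≠ l (e x)).card : ℝ) ≤
      ∑ i, |((Finset.univ.filter fun y => l y = i).card : ℝ)
        - ((Finset.univ.filter fun x => p x = i).card : ℝ)| := by
  have hne : Nonempty (α ≃ β) := ⟨Fintype.equivOfCardEq hcard⟩
  obtain ⟨e, he⟩ := Finite.exists_max
    (fun e : α ≃ β => (Finset.univ.filter fun x => p x = l (e x)).card)
  refine ⟨e, ?_⟩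
  have h1 : (Finset.univ.filter fun x => p x ≠ l (e x)).card
      = ∑ i, (Finset.univ.filter fun x => p x = i ∧ l (e x) ≠ i).card := by
    rw [Finset.card_eq_sum_card_fiberwise (f := p) (t := Finset.univ) (by intro x _; simp)]
    refine Finset.sum_congr rfl fun i _ => ?_
    congr 1
    ext x
    simp only [Finset.mem_filter, Finset.mem_univ, true_and]
    constructor
    · rintro ⟨a, b⟩; exact ⟨b, fun h => a (b.trans h.symm)⟩
    · rintro ⟨a, b⟩; exact ⟨fun h => b (h.symm.trans a), a⟩
  rw [h1]
  push_cast
  refine Finset.sum_le_sum fun i _ => ?_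
  rcases Finset.eq_empty_or_nonempty (Finset.univ.filter fun x => p x = i ∧ l (e x) ≠ i)
    with h0 | ⟨x, hx⟩
  · rw [h0]; simp
  simp only [Finset.mem_filter, Finset.mem_univ, true_and] at hx
  have claim : ∀ z, l (e z) = i → p z = i := by
    intro z hz
    by_contra hpz
    have hzx : z ≠ x := by rintro rfl; exact hx.2 hz
    have := he ((Equiv.swap x z).trans e)
    refine absurd this (not_le.2 (Finset.card_lt_card ?_))
    rw [Finset.ssubset_iff_of_subset]
    · refine ⟨x, ?_, ?_⟩
      · refine Finset.mem_filter.2 ⟨Finset.mem_univ _, ?_⟩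
        show p x = l (e (Equiv.swap x z x))
        rw [Equiv.swap_apply_left, hz, hx.1]
      · simp only [Finset.mem_filter, Finset.mem_univ, true_and]
        intro h; exact hx.2 (h.symm.trans hx.1)
    · intro w hw
      replace hw : p w = l (e w) := (Finset.mem_filter.1 hw).2
      refine Finset.mem_filter.2 ⟨Finset.mem_univ _, ?_⟩
      show p w = l (e (Equiv.swap x z w))
      have hwx : w ≠ x := by rintro rfl; exact hx.2 (hw.symm.trans hx.1)
      have hwz : w ≠ z := by rintro rfl; exact hpz (hw.trans hz)
      rw [Equiv.swap_apply_of_ne_of_ne hwx hwz]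
      exact hw
  have h2 : (Finset.univ.filter fun y => l y = i).card
      = (Finset.univ.filter fun x => p x = i ∧ l (e x) = i).card := by
    symm
    apply Finset.card_bij (fun x _ => e x)
    · intro a ha; simp at ha ⊢; exact ha.2
    · intro a _ b _ h; exact e.injective h
    · intro b hb
      simp at hb
      refine ⟨e.symm b, ?_, by simp⟩
      simp [hb]
      exact claim _ (by simpa using hb)
  have h3 : (Finset.univ.filter fun x => p x = i).card
      = (Finset.univ.filter fun x => p x = i ∧ l (e x) = i).card
        + (Finset.univ.filter fun x => p x = i ∧ l (e x) ≠ i).card := by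
    rw [← Finset.card_filter_add_card_filter_not (s := Finset.univ.filter fun x => p x = i)
      (fun x => l (e x) = i), Finset.filter_filter, Finset.filter_filter]
  rw [h3, h2]
  push_cast
  rw [sub_add_cancel_left, abs_neg]
  exact le_abs_self _

lemma overlay_err {α P : Type*} [Fintype α] [DecidableEq α] [DecidableEq P]
    (F : P → P → ℝ) (κ : ℝ) (hF : ∀ i j, |F i j| ≤ κ) (p l : α → P) (τ : ℝ)
    (h : ((Finset.univ.filter fun x => p x ≠ l x).card : ℝ) ≤ τ) (S T : Finset α) :
    |∑ x ∈ S, ∑ y ∈ T, (F (p x) (p y) - F (l x) (l y))| ≤ 4 * κ * τ * Fintype.card α := by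
  by_cases hα : IsEmpty α
  · simp [Finset.eq_empty_of_isEmpty]
  rw [not_isEmpty_iff] at hα
  obtain ⟨x0⟩ := hα
  have hκ : 0 ≤ κ := (abs_nonneg _).trans (hF (p x0) (p x0))
  have h1 : ∀ x y, |F (p x) (p y) - F (l x) (l y)| ≤
      2 * κ * (if p x ≠ l x then 1 else 0) + 2 * κ * (if p y ≠ l y then 1 else 0) := by
    intro x y
    by_cases h1 : p x = l x
    · by_cases h2 : p y = l y
      · simp [h1, h2]
      · have := abs_sub (F (p x) (p y)) (F (l x) (l y))
        simp only [ne_eq, h1, h2, not_true_eq_false, not_false_eq_true, if_true, if_false] at *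
        linarith [hF (l x) (p y), hF (l x) (l y)]
    · have := abs_sub (F (p x) (p y)) (F (l x) (l y))
      have h3 : 0 ≤ 2 * κ * (if p y ≠ l y then 1 else 0) := by positivity
      rw [if_pos h1]
      linarith [hF (p x) (p y), hF (l x) (l y)]
  calc |∑ x ∈ S, ∑ y ∈ T, (F (p x) (p y) - F (l x) (l y))|
      ≤ ∑ x ∈ S, ∑ y ∈ T, |F (p x) (p y) - F (l x) (l y)| :=
        (Finset.abs_sum_le_sum_abs _ _).trans
          (Finset.sum_le_sum fun x _ => Finset.abs_sum_le_sum_abs _ _)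
    _ ≤ ∑ x, ∑ y, |F (p x) (p y) - F (l x) (l y)| := by
        refine (Finset.sum_le_sum fun x _ => Finset.sum_le_sum_of_subset_of_nonneg
          (Finset.subset_univ T) fun _ _ _ => abs_nonneg _).trans ?_
        exact Finset.sum_le_sum_of_subset_of_nonneg (Finset.subset_univ S)
          fun _ _ _ => Finset.sum_nonneg fun _ _ => abs_nonneg _
    _ ≤ ∑ x, ∑ y, (2 * κ * (if p x ≠ l x then 1 else 0)
          + 2 * κ * (if p y ≠ l y then 1 else 0)) :=
        Finset.sum_le_sum fun x _ => Finset.sum_le_sum fun y _ => h1 x y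
    _ = 4 * κ * ((Finset.univ.filter fun x => p x ≠ l x).card : ℝ) * Fintype.card α := by
        simp only [Finset.sum_add_distrib, ← Finset.mul_sum, Finset.sum_const, Finset.card_univ,
          nsmul_eq_mul, Finset.sum_boole]
        ring
    _ ≤ _ := by gcongr

lemma overlay {α P P' : Type*} [Fintype α] [DecidableEq α] [Fintype P] [DecidableEq P] [Fintype P']
    [DecidableEq P'] {k M : ℕ} (hcard : Fintype.card α = k * M)
    (F : P → P → ℝ) (F' : P' → P' → ℝ) (κ : ℝ) (hF : ∀ i j, |F i j| ≤ κ) (hF' : ∀ i j, |F' i j| ≤ κ)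
    (p : α → P) (p' : α → P') (X Y : Fin k → α) (δ : ℝ)
    (hδ : ∀ S T : Finset (Fin k),
      |∑ u ∈ S, ∑ v ∈ T, (F (p (X u)) (p (X v)) - F' (p' (Y u)) (p' (Y v)))| ≤ δ)
    (τ τ' : ℝ)
    (hτ : ∑ i, |M * ((Finset.univ.filter fun u => p (X u) = i).card : ℝ)
        - ((Finset.univ.filter fun x => p x = i).card : ℝ)| ≤ τ)
    (hτ' : ∑ i, |M * ((Finset.univ.filter fun u => p' (Y u) = i).card : ℝ)
        - ((Finset.univ.filter fun x => p' x = i).card : ℝ)| ≤ τ') :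
    ∃ σ : Equiv.Perm α, ∀ S T : Finset α,
      |∑ x ∈ S, ∑ y ∈ T, (F (p x) (p y) - F' (p' (σ x)) (p' (σ y)))| ≤
        δ * M ^ 2 + 4 * κ * τ * Fintype.card α + 4 * κ * τ' * Fintype.card α := by
  have hcard' : Fintype.card α = Fintype.card (Fin k × Fin M) := by simp [hcard]
  have hcnt : ∀ Q : Fin k → Prop, ∀ _ : DecidablePred Q,
      ((Finset.univ.filter fun y : Fin k × Fin M => Q y.1).card : ℝ)
        = M * ((Finset.univ.filter fun u => Q u).card : ℝ) := by
    intro Q _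
    have : (Finset.univ.filter fun y : Fin k × Fin M => Q y.1)
        = (Finset.univ.filter fun u => Q u) ×ˢ Finset.univ := by
      ext y; simp
    rw [this, Finset.card_product]
    push_cast
    simp [mul_comm]
  obtain ⟨e, he⟩ := match_labels hcard' p (fun y => p (X y.1))
  obtain ⟨e', he'⟩ := match_labels hcard' p' (fun y => p' (Y y.1))
  replace he := he.trans (le_of_eq (Finset.sum_congr rfl fun i _ => by
    rw [hcnt (fun u => p (X u) = i) inferInstance]))
  replace he' := he'.trans (le_of_eq (Finset.sum_congr rfl fun i _ => by
    rw [hcnt (fun u => p' (Y u) = i) inferInstance]))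
  refine ⟨e.trans e'.symm, ?_⟩
  intro S T
  set σ : Equiv.Perm α := e.trans e'.symm with hσ
  have b1 := overlay_err F κ hF p (fun x => p (X (e x).1)) τ (he.trans hτ) S T
  have hbad : ((Finset.univ.filter fun x => p' (σ x) ≠ p' (Y (e x).1)).card : ℝ) ≤ τ' := by
    refine le_trans (le_of_eq ?_) (he'.trans hτ')
    congr 1
    apply Finset.card_bij (fun x _ => σ x)
    · intro a ha; simp [hσ] at ha ⊢; exact ha
    · intro a _ b _ h; exact σ.injective h
    · intro b hb
      refine ⟨σ.symm b, ?_, by simp⟩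
      simp [hσ] at hb ⊢
      exact hb
  have b2 := overlay_err F' κ hF' (fun x => p' (σ x)) (fun x => p' (Y (e x).1)) τ' hbad S T
  have b3 : |∑ x ∈ S, ∑ y ∈ T, (F (p (X (e x).1)) (p (X (e y).1))
      - F' (p' (Y (e x).1)) (p' (Y (e y).1)))| ≤ δ * M ^ 2 := by
    set D : Fin k → Fin k → ℝ := fun u v =>
      F (p (X u)) (p (X v)) - F' (p' (Y u)) (p' (Y v)) with hD
    set cs : Finset α → Fin k → ℝ := fun S u => ((S.filter fun x => (e x).1 = u).card : ℝ) with hcs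
    have hcs1 : ∀ S u, cs S u ∈ Set.Icc (0:ℝ) M := by
      intro S u
      refine ⟨by simp [hcs], ?_⟩
      simp only [hcs]
      have : (S.filter fun x => (e x).1 = u).card ≤ M := by
        calc (S.filter fun x => (e x).1 = u).card
            ≤ (Finset.univ : Finset (Fin M)).card := by
              apply Finset.card_le_card_of_injOn (fun x => (e x).2) (by intro x _; simp)
              intro a ha b hb hab
              simp at ha hb hab
              apply e.injective
              ext
              · rw [ha.2, hb.2]
              · rw [hab]
          _ = M := by simp
      exact_mod_cast this
    have hsum : ∀ (S : Finset α) (f : Fin k → ℝ), ∑ x ∈ S, f (e x).1 = ∑ u, cs S u * f u := by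
      intro S f
      rw [← Finset.sum_fiberwise_of_maps_to (s := S) (t := Finset.univ) (g := fun x => (e x).1)
        (by intro x _; simp)]
      refine Finset.sum_congr rfl fun u _ => ?_
      rw [Finset.sum_congr rfl (g := fun _ => f u) (by intro x hx; simp at hx; rw [hx.2])]
      simp [hcs]
    have e1 : ∑ x ∈ S, ∑ y ∈ T, D (e x).1 (e y).1 = ∑ u, ∑ v, cs S u * cs T v * D u v := by
      rw [hsum S (fun u => ∑ y ∈ T, D u (e y).1)]
      refine Finset.sum_congr rfl fun u _ => ?_
      rw [hsum T (fun v => D u v), Finset.mul_sum]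
      simp only [mul_assoc]
    have := frac D δ M (by positivity) hδ (cs S) (cs T) (hcs1 S) (hcs1 T)
    rw [← e1] at this
    exact this
  have e2 : ∑ x ∈ S, ∑ y ∈ T, (F (p x) (p y) - F' (p' (σ x)) (p' (σ y)))
      = ∑ x ∈ S, ∑ y ∈ T, (F (p (X (e x).1)) (p (X (e y).1))
      - F' (p' (Y (e x).1)) (p' (Y (e y).1)))
      + ∑ x ∈ S, ∑ y ∈ T, (F (p x) (p y) - F (p (X (e x).1)) (p (X (e y).1)))
      - ∑ x ∈ S, ∑ y ∈ T, (F' (p' (σ x)) (p' (σ y)) - F' (p' (Y (e x).1)) (p' (Y (e y).1))) := by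
    simp only [← Finset.sum_add_distrib, ← Finset.sum_sub_distrib]
    refine Finset.sum_congr rfl fun x _ => Finset.sum_congr rfl fun y _ => ?_
    ring
  rw [e2]
  refine (abs_sub _ _).trans ?_
  have := abs_add_le (∑ x ∈ S, ∑ y ∈ T, (F (p (X (e x).1)) (p (X (e y).1))
      - F' (p' (Y (e x).1)) (p' (Y (e y).1))))
      (∑ x ∈ S, ∑ y ∈ T, (F (p x) (p y) - F (p (X (e x).1)) (p (X (e y).1))))
  linarith

end ACL

namespace ACL

set_option maxHeartbeats 1000000 in
lemma beta_num (r : ℕ) (hr : 1 ≤ r) (k : ℝ) (hk : (64:ℝ) ^ r ≤ k) :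
    (k ^ 2 * (1 / √r + 1 / √r) + 2 * (2 ^ r * (k * ((1 + √r) * (2 * √k + 4 * (r + 1)))))
        + k * ((1 + √r) ^ 2 * (√k + 1)) / √r + k + (k ^ 2 * (1 / 2 ^ r) + 2 * k / (1 / 2 ^ r) ^ 3)) / k ^ 2
      + 4 * √r * (4 ^ r * (√k / k)) ≤ 2 / √r + 28 * r / 2 ^ r := by
  have hr1 : (1:ℝ) ≤ r := by exact_mod_cast hr
  set w : ℝ := 2 ^ r with hw
  have hw1 : (r:ℝ) + 1 ≤ w := by
    have : r + 1 ≤ 2 ^ r := Nat.lt_two_pow_self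
    rw [hw]; exact_mod_cast this
  have hw0 : 0 < w := by positivity
  have h64 : (64:ℝ) ^ r = w ^ 6 := by
    rw [hw, ← pow_mul, mul_comm, pow_mul]; norm_num
  have h4 : (4:ℝ) ^ r = w ^ 2 := by
    rw [hw, ← pow_mul, mul_comm, pow_mul]; norm_num
  rw [h64] at hk
  rw [h4]
  have hk0 : 0 < k := lt_of_lt_of_le (by positivity) hk
  set z := √k with hz
  have hz2 : k = z ^ 2 := by rw [hz, Real.sq_sqrt hk0.le]
  have hzw : w ^ 3 ≤ z := by
    rw [hz]; apply Real.le_sqrt_of_sq_le; calc (w^3)^2 = w ^ 6 := by ring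
      _ ≤ k := hk
  have hz0 : 0 < z := Real.sqrt_pos.2 hk0
  set c := √(r:ℝ) with hc
  have hc1 : 1 ≤ c := by rw [hc]; exact Real.one_le_sqrt.2 hr1
  have hc2 : c ^ 2 = r := Real.sq_sqrt (by linarith)
  have hcr : c ≤ r := by nlinarith
  have hc0 : 0 < c := by linarith
  rw [hz2]
  have e : ((z ^ 2) ^ 2 * (1 / c + 1 / c) + 2 * (w * (z ^ 2 * ((1 + c) * (2 * z + 4 * (r + 1)))))
        + z ^ 2 * ((1 + c) ^ 2 * (z + 1)) / c + z ^ 2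
        + ((z ^ 2) ^ 2 * (1 / w) + 2 * z ^ 2 / (1 / w) ^ 3)) / (z ^ 2) ^ 2
      + 4 * c * (w ^ 2 * (z / z ^ 2))
      = 2 / c + 2 * w * (1 + c) * (2 * z + 4 * (r + 1)) / z ^ 2
        + ((1 + c) ^ 2 / c) * (z + 1) / z ^ 2 + 1 / z ^ 2 + 1 / w + 2 * w ^ 3 / z ^ 2
        + 4 * c * w ^ 2 / z := by
    field_simp
    ring
  rw [e]
  have hw2 : 2 ≤ w := by linarith
  have hw3 : w * 4 ≤ w ^ 3 := by nlinarith
  have hzz : 4 * (r + 1) ≤ z := by linarith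
  have hz1 : 1 ≤ z := by linarith
  have t1 : 2 * w * (1 + c) * (2 * z + 4 * (r + 1)) / z ^ 2 ≤ 12 * r / w := by
    rw [div_le_div_iff₀ (by positivity) hw0]
    have a1 : 2 * w * (1 + c) * (2 * z + 4 * (r + 1)) * w ≤ 2 * w * (2 * r) * (3 * z) * w := by
      gcongr <;> linarith
    have a2 : 12 * r * (z * w ^ 2) ≤ 12 * r * (z * z) := by
      gcongr; nlinarith [sq_nonneg w]
    nlinarith
  have t2 : ((1 + c) ^ 2 / c) * (z + 1) / z ^ 2 ≤ 8 * r / w := by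
    have a0 : (1 + c) ^ 2 / c ≤ 4 * r := by
      rw [div_le_iff₀ hc0]; nlinarith
    rw [div_le_div_iff₀ (by positivity) hw0]
    calc ((1 + c) ^ 2 / c) * (z + 1) * w ≤ (4 * r) * (2 * z) * z := by
          gcongr <;> nlinarith
      _ = _ := by ring
  have t3 : 1 / z ^ 2 ≤ 1 * r / w := by
    rw [div_le_div_iff₀ (by positivity) hw0]
    have a1 : w ≤ z := by linarith
    have a2 : z * 1 ≤ z * z := by gcongr
    have a3 : 1 * (z * z) ≤ r * (z * z) := by gcongr
    linarith [sq z]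
  have t4 : 1 / w ≤ 1 * r / w := by gcongr; linarith
  have t5 : 2 * w ^ 3 / z ^ 2 ≤ 2 * r / w := by
    rw [div_le_div_iff₀ (by positivity) hw0]
    have : w ^ 3 * w ≤ z * z := by gcongr; nlinarith
    nlinarith
  have t6 : 4 * c * w ^ 2 / z ≤ 4 * r / w := by
    rw [div_le_div_iff₀ (by positivity) hw0]
    calc 4 * c * w ^ 2 * w = 4 * c * w ^ 3 := by ring
      _ ≤ _ := by gcongr
  have : 28 * r / w = 12 * r / w + 8 * r / w + 1 * r / w + 1 * r / w + 2 * r / w + 4 * r / w := by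
    ring
  linarith

/-- probability that the random graph on `k` sampled points has edge set `s` -/
noncomputable def PA {α : Type} [Fintype α] {k : ℕ} (A : α → α → ℝ) (s : Finset (Fin k × Fin k)) : ℝ :=
  𝔼 X : Fin k → α, wt (fun u v => A (X u) (X v)) s

lemma freq {α P : Type} [Fintype α] [DecidableEq α] [Nonempty α] [Fintype P] [DecidableEq P]
    {k : ℕ} (hk : 0 < k) (p : α → P) :
    𝔼 X : Fin k → α, ∑ i, |((Finset.univ.filter fun u => p (X u) = i).card : ℝ) / k
      - ((Finset.univ.filter fun x => p x = i).card : ℝ) / Fintype.card α|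
      ≤ Fintype.card P * (√k / k) := by
  have hk0 : (0:ℝ) < k := by exact_mod_cast hk
  rw [Finset.expect_sum_comm]
  have : ∀ i : P, 𝔼 X : Fin k → α, |((Finset.univ.filter fun u => p (X u) = i).card : ℝ) / k
      - ((Finset.univ.filter fun x => p x = i).card : ℝ) / Fintype.card α| ≤ √k / k := by
    intro i
    have := mixvar (ι := Fin k) (α := α) ∅ (fun _ x => if p x = i then 1 else 0) 1
      (by intro X x; split_ifs <;> simp) (by intros; rfl)
    simp only [Fintype.card_fin, Finset.card_empty, Nat.cast_zero, mul_zero, add_zero, one_mul,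
      Finset.sum_boole] at this
    rw [le_div_iff₀ hk0, Finset.expect_mul]
    refine le_trans (le_of_eq ?_) this
    refine Finset.expect_congr rfl fun X _ => ?_
    rw [← abs_of_pos hk0, ← abs_mul, abs_of_pos hk0, sub_mul, div_mul_cancel₀ _ hk0.ne',
      Fintype.expect_eq_sum_div_card, Finset.sum_boole]
    congr 1
    ring
  refine (Finset.sum_le_sum fun i _ => this i).trans ?_
  simp

lemma good {α : Type} [Fintype α] [DecidableEq α] [Nonempty α] (A : α → α → ℝ)
    (hA : ∀ x y, A x y ∈ Set.Icc (0:ℝ) 1) (hs : ∀ x y, A x y = A y x) (r k : ℕ) (hr : 1 ≤ r)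
    (hk : 64 ^ r ≤ k) :
    ∃ (P : Type) (_ : Fintype P) (_ : DecidableEq P) (p : α → P) (F : P → P → ℝ)
      (D : Finset (Fin k × Fin k) → ℝ), (∀ i j, |F i j| ≤ √r) ∧
      (∀ S T : Finset α, |∑ x ∈ S, ∑ y ∈ T, (A x y - F (p x) (p y))|
          ≤ 1 / √r * (Fintype.card α : ℝ) ^ 2) ∧
      (∀ s, 0 ≤ D s ∧ D s ≤ 10 * r) ∧
      (∑ s ∈ (Ek k).powerset, PA A s * D s ≤ 2 / √r + 28 * r / 2 ^ r) ∧
      ∀ s, ∃ (X : Fin k → α) (c τ : ℝ),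
        (∀ S T, |∑ u ∈ S, ∑ v ∈ T, (Gm s u v - F (p (X u)) (p (X v)))| ≤ c) ∧
        (∑ i, |((Finset.univ.filter fun u => p (X u) = i).card : ℝ) / k
          - ((Finset.univ.filter fun x => p x = i).card : ℝ) / Fintype.card α| ≤ τ) ∧
        c / k ^ 2 + 4 * √r * τ ≤ D s := by
  have hr1 : (1:ℝ) ≤ r := by exact_mod_cast hr
  have hkn : 0 < k := lt_of_lt_of_le (by positivity) hk
  have : Nonempty (Fin k) := ⟨⟨0, hkn⟩⟩
  have hk0 : (0:ℝ) < k := by exact_mod_cast hkn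
  have hN0 : (0:ℝ) < Fintype.card α := by exact_mod_cast Fintype.card_pos
  have hc1 : 1 ≤ √(r:ℝ) := Real.one_le_sqrt.2 hr1
  have hc2 : √(r:ℝ) ^ 2 = r := Real.sq_sqrt (by linarith)
  have hcr : √(r:ℝ) ≤ r := by nlinarith
  obtain ⟨P, i1, i2, p, F, hcP, hF, hL2, hcut⟩ := fk A hA r hr
  have hK : ∀ x y, |A x y - F (p x) (p y)| ≤ 1 + √r := by
    intro x y
    refine (abs_sub _ _).trans (add_le_add ?_ (hF _ _))
    rw [abs_of_nonneg (hA x y).1]; exact (hA x y).2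
  obtain ⟨Ms, hMs, hMsE⟩ := samp (ι := Fin k) (fun x y => A x y - F (p x) (p y)) (1 + √r) (1 / √r)
    hK hcut hL2 r hr
  have hno := fun X : Fin k → α => noise hkn (fun u v => A (X u) (X v)) (fun u v => hA _ _)
    (fun u v => hs _ _) (1 / 2 ^ r) (by positivity)
  choose Mn hMn hMnE using hno
  set c0 : ℝ := k ^ 2 * (1 + √r) with hc0
  set τ : (Fin k → α) → ℝ := fun X => ∑ i, |((Finset.univ.filter fun u => p (X u) = i).card : ℝ) / k
          - ((Finset.univ.filter fun x => p x = i).card : ℝ) / Fintype.card α| with hτ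
  set c : Finset (Fin k × Fin k) → (Fin k → α) → ℝ := fun s X =>
    min (Ms X + Mn X s + k) c0 with hc
  have hGb : ∀ s (u v : Fin k), |Gm s u v| ≤ 1 := by
    intro s u v; unfold Gm; split_ifs <;> simp
  have hcb : ∀ s X S T, |∑ u ∈ S, ∑ v ∈ T, (Gm s u v - F (p (X u)) (p (X v)))| ≤ c s X := by
    intro s X S T
    refine le_min ?_ ?_
    · have e1 : ∑ u ∈ S, ∑ v ∈ T, (Gm s u v - F (p (X u)) (p (X v)))
          = ∑ u ∈ S, ∑ v ∈ T, (A (X u) (X v) - F (p (X u)) (p (X v)))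
          + ∑ u ∈ S, ∑ v ∈ T, (if u = v then 0 else Gm s u v - A (X u) (X v))
          + ∑ u ∈ S, ∑ v ∈ T, (if u = v then Gm s u v - A (X u) (X v) else 0) := by
        simp only [← Finset.sum_add_distrib]
        refine Finset.sum_congr rfl fun u _ => Finset.sum_congr rfl fun v _ => ?_
        split_ifs <;> ring
      have e2 : |∑ u ∈ S, ∑ v ∈ T, (if u = v then Gm s u v - A (X u) (X v) else 0)| ≤ k := by
        refine (Finset.abs_sum_le_sum_abs _ _).trans ?_
        have : ∀ u ∈ S, |∑ v ∈ T, (if u = v then Gm s u v - A (X u) (X v) else 0)| ≤ 1 := by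
          intro u _
          rw [Finset.sum_ite_eq]
          have := hA (X u) (X u)
          rw [Set.mem_Icc] at this
          unfold Gm
          split_ifs <;> rw [abs_le] <;> constructor <;> linarith
        refine (Finset.sum_le_sum this).trans ?_
        simp only [Finset.sum_const, nsmul_eq_mul, mul_one]
        exact_mod_cast (Finset.card_le_univ S).trans (by simp)
      rw [e1]
      refine (abs_add_le _ _).trans (add_le_add ((abs_add_le _ _).trans (add_le_add ?_ ?_)) e2)
      · exact hMs X S T
      · exact hMn X s S T
    · calc |∑ u ∈ S, ∑ v ∈ T, (Gm s u v - F (p (X u)) (p (X v)))|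
          ≤ ∑ u ∈ S, ∑ v ∈ T, |Gm s u v - F (p (X u)) (p (X v))| :=
            (Finset.abs_sum_le_sum_abs _ _).trans
              (Finset.sum_le_sum fun x _ => Finset.abs_sum_le_sum_abs _ _)
        _ ≤ ∑ u ∈ S, ∑ v ∈ T, (1 + √r) := by
            refine Finset.sum_le_sum fun u _ => Finset.sum_le_sum fun v _ => ?_
            exact (abs_sub _ _).trans (add_le_add (hGb _ _ _) (hF _ _))
        _ = (S.card * T.card) * (1 + √r) := by
            simp only [Finset.sum_const, nsmul_eq_mul]; ring
        _ ≤ (k * k) * (1 + √r) := by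
            have h1 : (S.card : ℝ) ≤ k := by exact_mod_cast (Finset.card_le_univ S).trans (by simp)
            have h2 : (T.card : ℝ) ≤ k := by exact_mod_cast (Finset.card_le_univ T).trans (by simp)
            gcongr
        _ = c0 := by rw [hc0]; ring
  have hcn : ∀ s X, 0 ≤ c s X := fun s X => (abs_nonneg _).trans (hcb s X ∅ ∅)
  have hτ0 : ∀ X, 0 ≤ τ X := fun X => Finset.sum_nonneg fun _ _ => abs_nonneg _
  have hτ2 : ∀ X, τ X ≤ 2 := by
    intro X
    have : τ X ≤ ∑ i, (((Finset.univ.filter fun u => p (X u) = i).card : ℝ) / k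
          + ((Finset.univ.filter fun x => p x = i).card : ℝ) / Fintype.card α) := by
      refine Finset.sum_le_sum fun i _ => (abs_sub _ _).trans (le_of_eq ?_)
      rw [abs_of_nonneg (by positivity), abs_of_nonneg (by positivity)]
    refine this.trans (le_of_eq ?_)
    rw [Finset.sum_add_distrib, ← Finset.sum_div, ← Finset.sum_div]
    rw [← Nat.cast_sum, ← Nat.cast_sum,
      ← Finset.card_eq_sum_card_fiberwise (f := fun u => p (X u)) (s := Finset.univ) (by intro x _; simp),
      ← Finset.card_eq_sum_card_fiberwise (f := p) (s := Finset.univ) (by intro x _; simp)]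
    simp only [Finset.card_univ, Fintype.card_fin]
    rw [div_self hk0.ne', div_self hN0.ne']; norm_num
  set g : Finset (Fin k × Fin k) → (Fin k → α) → ℝ := fun s X =>
    c s X / k ^ 2 + 4 * √r * τ X with hg
  have hmin := fun s => Finite.exists_min (g s)
  choose X0 hX0 using hmin
  refine ⟨P, i1, i2, p, F, fun s => g s (X0 s), hF, hcut, ?_, ?_, ?_⟩
  · intro s
    constructor
    · have := hcn s (X0 s); have := hτ0 (X0 s)
      simp only [hg]; positivity
    · have h1 : c s (X0 s) / k ^ 2 ≤ 1 + √r := by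
        rw [div_le_iff₀ (by positivity), mul_comm]; exact min_le_right _ _
      have h2 := hτ2 (X0 s)
      have h3 : 4 * √r * τ (X0 s) ≤ 4 * √r * 2 := by gcongr
      simp only [hg]; linarith
  · have step : ∑ s ∈ (Ek k).powerset, PA A s * g s (X0 s)
        ≤ 𝔼 X : Fin k → α, ∑ s ∈ (Ek k).powerset, wt (fun u v => A (X u) (X v)) s * g s X := by
      rw [Finset.expect_sum_comm]
      refine Finset.sum_le_sum fun s _ => ?_
      unfold PA
      rw [Finset.expect_mul]
      refine Finset.expect_le_expect fun X _ => ?_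
      exact mul_le_mul_of_nonneg_left (hX0 s X) (wt_nonneg _ (fun u v => hA _ _) s)
    have step2 : ∀ X : Fin k → α, ∑ s ∈ (Ek k).powerset, wt (fun u v => A (X u) (X v)) s * g s X
        ≤ (Ms X + k + (k ^ 2 * (1 / 2 ^ r) + 2 * k / (1 / 2 ^ r) ^ 3)) / k ^ 2 + 4 * √r * τ X := by
      intro X
      have a1 : ∑ s ∈ (Ek k).powerset, wt (fun u v => A (X u) (X v)) s * g s X
          ≤ ∑ s ∈ (Ek k).powerset, (wt (fun u v => A (X u) (X v)) s * ((Ms X + k) / k ^ 2 + 4 * √r * τ X)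
            + wt (fun u v => A (X u) (X v)) s * Mn X s / k ^ 2) := by
        refine Finset.sum_le_sum fun s _ => ?_
        have hw := wt_nonneg (fun u v => A (X u) (X v)) (fun u v => hA _ _) s
        have : g s X ≤ (Ms X + Mn X s + k) / k ^ 2 + 4 * √r * τ X := by
          simp only [hg]; gcongr; exact min_le_left _ _
        refine (mul_le_mul_of_nonneg_left this hw).trans (le_of_eq ?_)
        ring
      refine a1.trans ?_
      rw [Finset.sum_add_distrib, ← Finset.sum_mul, wt_sum, ← Finset.sum_div]
      have := hMnE X
      have h3 : (∑ s ∈ (Ek k).powerset, wt (fun u v => A (X u) (X v)) s * Mn X s) / (k:ℝ) ^ 2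
        ≤ (k ^ 2 * (1 / 2 ^ r) + 2 * k / (1 / 2 ^ r) ^ 3) / (k:ℝ) ^ 2 := by gcongr
      rw [add_div _ (k ^ 2 * (1 / 2 ^ r) + 2 * k / (1 / 2 ^ r) ^ 3 : ℝ)]
      linarith
    refine step.trans ((Finset.expect_le_expect fun X _ => step2 X).trans ?_)
    rw [Finset.expect_add_distrib, ← Finset.expect_div, ← Finset.mul_expect,
      Finset.expect_add_distrib, Finset.expect_add_distrib]
    rw [Fintype.expect_const, Fintype.expect_const]
    have hfr := freq (α := α) hkn p
    rw [hcP] at hfr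
    push_cast at hfr
    simp only [Fintype.card_fin] at hMsE
    refine le_trans ?_ (beta_num r hr k (by exact_mod_cast hk))
    gcongr
  · intro s
    exact ⟨X0 s, c s (X0 s), τ (X0 s), hcb s (X0 s), le_rfl, le_rfl⟩

end ACL

namespace ACL

/-- homomorphism density on a finite type -/
noncomputable def hd {α : Type} [Fintype α] {k : ℕ} (s : Finset (Fin k × Fin k)) (A : α → α → ℝ) : ℝ :=
  𝔼 X : Fin k → α, ∏ p ∈ s, A (X p.1) (X p.2)

lemma card_Ek (k : ℕ) : 2 * (Ek k).card + k = k ^ 2 := by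
  have h1 : (Ek k).card = (Finset.univ.filter fun p : Fin k × Fin k => p.2 < p.1).card := by
    apply Finset.card_bij (fun p _ => (p.2, p.1))
    · intro a ha; simpa [Ek] using ha
    · intro a _ b _ h; ext <;> simp_all
    · intro b hb; exact ⟨(b.2, b.1), by simpa [Ek] using hb, rfl⟩
  have h2 : (Finset.univ.filter fun p : Fin k × Fin k => p.1 = p.2).card = k := by
    have : (Finset.univ.filter fun p : Fin k × Fin k => p.1 = p.2)
      = Finset.univ.image fun i : Fin k => (i, i) := by
      ext ⟨a, b⟩; simp [eq_comm]
    rw [this, Finset.card_image_of_injective _ (fun a b h => by simpa using h)]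
    simp
  have h3 := Finset.card_filter_add_card_filter_not (s := (Finset.univ : Finset (Fin k × Fin k)))
    (fun p => p.1 < p.2)
  have h4 := Finset.card_filter_add_card_filter_not
    (s := (Finset.univ.filter fun p : Fin k × Fin k => ¬ p.1 < p.2)) (fun p => p.1 = p.2)
  rw [Finset.filter_filter, Finset.filter_filter] at h4
  have h5 : (Finset.univ.filter fun p : Fin k × Fin k => ¬ p.1 < p.2 ∧ p.1 = p.2)
      = (Finset.univ.filter fun p : Fin k × Fin k => p.1 = p.2) := by
    ext p; simp only [Finset.mem_filter, Finset.mem_univ, true_and]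
    constructor
    · exact fun h => h.2
    · exact fun h => ⟨by rw [h]; exact lt_irrefl _, h⟩
  have h6 : (Finset.univ.filter fun p : Fin k × Fin k => ¬ p.1 < p.2 ∧ ¬ p.1 = p.2)
      = (Finset.univ.filter fun p : Fin k × Fin k => p.2 < p.1) := by
    ext p; simp only [Finset.mem_filter, Finset.mem_univ, true_and]
    constructor
    · rintro ⟨a, b⟩; exact lt_of_le_of_ne (not_lt.1 a) (Ne.symm b)
    · exact fun h => ⟨not_lt.2 h.le, h.ne'⟩
  rw [h5, h6, h2] at h4
  have h7 : (Finset.univ : Finset (Fin k × Fin k)).card = k ^ 2 := by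
    simp [sq]
  unfold Ek at *
  omega

lemma PA_eq {α : Type} [Fintype α] {k : ℕ} (A : α → α → ℝ) (s : Finset (Fin k × Fin k)) :
    PA A s = ∑ t ∈ (Ek k \ s).powerset, (-1) ^ t.card * hd (s ∪ t) A := by
  unfold PA hd
  simp only [Finset.mul_expect]
  rw [← Finset.expect_sum_comm]
  refine Finset.expect_congr rfl fun X _ => ?_
  unfold wt
  rw [show (∏ p ∈ Ek k \ s, (1 - A (X p.1) (X p.2))) = ∑ t ∈ (Ek k \ s).powerset,
    (-1) ^ t.card * ∏ p ∈ t, A (X p.1) (X p.2) by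
    simp only [sub_eq_add_neg]
    rw [Finset.prod_one_add]
    refine Finset.sum_congr rfl fun t _ => ?_
    rw [Finset.prod_neg]]
  rw [Finset.mul_sum]
  refine Finset.sum_congr rfl fun t ht => ?_
  rw [Finset.prod_union]
  · ring
  · exact (Finset.disjoint_sdiff).mono_right (Finset.mem_powerset.1 ht)

lemma PA_diff {α : Type} [Fintype α] {k : ℕ} (A B : α → α → ℝ)
    (h : ∀ s ⊆ Ek k, |hd s A - hd s B| ≤ 2 / 2 ^ (k ^ 2)) :
    ∑ s ∈ (Ek k).powerset, |PA A s - PA B s| ≤ 2 / 2 ^ k := by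
  have h1 : ∀ s ∈ (Ek k).powerset, |PA A s - PA B s| ≤ 2 ^ (Ek k).card * (2 / 2 ^ (k ^ 2)) := by
    intro s hs
    rw [Finset.mem_powerset] at hs
    rw [PA_eq, PA_eq, ← Finset.sum_sub_distrib]
    refine (Finset.abs_sum_le_sum_abs _ _).trans ?_
    have : ∀ t ∈ (Ek k \ s).powerset,
        |(-1) ^ t.card * hd (s ∪ t) A - (-1) ^ t.card * hd (s ∪ t) B| ≤ (2 / 2 ^ (k ^ 2) : ℝ) := by
      intro t ht
      rw [← mul_sub, abs_mul, abs_pow, abs_neg, abs_one, one_pow, one_mul]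
      exact h _ (Finset.union_subset hs ((Finset.mem_powerset.1 ht).trans Finset.sdiff_subset))
    refine (Finset.sum_le_sum this).trans ?_
    rw [Finset.sum_const, nsmul_eq_mul, Finset.card_powerset]
    push_cast
    gcongr
    · norm_num
    · exact Finset.sdiff_subset
  refine (Finset.sum_le_sum h1).trans (le_of_eq ?_)
  rw [Finset.sum_const, nsmul_eq_mul, Finset.card_powerset, ← card_Ek k]
  push_cast
  rw [pow_add, two_mul, pow_add]
  field_simp

lemma pow_num (r : ℕ) (hr : 66 ≤ r) : 76 * r ^ 2 ≤ 2 ^ r := by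
  induction r, hr using Nat.le_induction with
  | base => norm_num
  | succ n hn ih => rw [pow_succ 2]; nlinarith

lemma core {α : Type} [Fintype α] [DecidableEq α] [Nonempty α] (r k M : ℕ) (hr : 66 ≤ r)
    (hk : 64 ^ r ≤ k) (hcard : Fintype.card α = k * M) (A B : α → α → ℝ)
    (hA : ∀ x y, A x y ∈ Set.Icc (0:ℝ) 1) (hAs : ∀ x y, A x y = A y x)
    (hB : ∀ x y, B x y ∈ Set.Icc (0:ℝ) 1) (hBs : ∀ x y, B x y = B y x)
    (h : ∀ s ⊆ Ek k, |hd s A - hd s B| ≤ 2 / 2 ^ (k ^ 2)) :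
    ∃ σ : Equiv.Perm α, ∀ S T : Finset α,
      |∑ x ∈ S, ∑ y ∈ T, (A x y - B (σ x) (σ y))| ≤ 7 / √r * (Fintype.card α : ℝ) ^ 2 := by
  have hr1 : (66:ℝ) ≤ r := by exact_mod_cast hr
  have hkn : 0 < k := lt_of_lt_of_le (by positivity) hk
  have hk0 : (0:ℝ) < k := by exact_mod_cast hkn
  have hN0 : (0:ℝ) < Fintype.card α := by exact_mod_cast Fintype.card_pos
  have hNk : (Fintype.card α : ℝ) = k * M := by rw [hcard]; push_cast; rfl
  have hM0 : (0:ℝ) < M := by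
    rw [hNk] at hN0; exact pos_of_mul_pos_right hN0 hk0.le
  obtain ⟨P, i1, i2, p, F, D, hF, hcut, hD, hDE, hX⟩ := good A hA hAs r k (by omega) hk
  obtain ⟨P', i1', i2', p', F', D', hF', hcut', hD', hDE', hX'⟩ := good B hB hBs r k (by omega) hk
  have hP0 : ∀ s, 0 ≤ PA A (k := k) s := fun s =>
    Finset.expect_nonneg fun X _ => wt_nonneg _ (fun u v => hA _ _) s
  have hP1 : ∑ s ∈ (Ek k).powerset, PA A s = 1 := by
    unfold PA
    rw [← Finset.expect_sum_comm]
    simp only [wt_sum]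
    simp
  have hdiff := PA_diff A B h
  have hcross : ∑ s ∈ (Ek k).powerset, PA A s * D' s
      ≤ 2 / √r + 28 * r / 2 ^ r + 20 * r / 2 ^ r := by
    have e1 : ∑ s ∈ (Ek k).powerset, PA A s * D' s
      ≤ ∑ s ∈ (Ek k).powerset, PA B s * D' s + ∑ s ∈ (Ek k).powerset, |PA A s - PA B s| * (10 * r) := by
      rw [← Finset.sum_add_distrib]
      refine Finset.sum_le_sum fun s _ => ?_
      have a1 := le_abs_self (PA A s - PA B s)
      have a2 := hD' s
      have a3 : |PA A s - PA B s| * D' s ≤ |PA A s - PA B s| * (10 * r) := by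
        gcongr; exact a2.2
      nlinarith [mul_le_mul_of_nonneg_right a1 a2.1]
    rw [← Finset.sum_mul] at e1
    have e2 : (∑ s ∈ (Ek k).powerset, |PA A s - PA B s|) * (10 * r) ≤ 2 / 2 ^ k * (10 * r) := by
      gcongr
    have e3 : (2:ℝ) / 2 ^ k * (10 * r) ≤ 2 / 2 ^ r * (10 * r) := by
      have : r ≤ k := le_trans (Nat.lt_pow_self (by norm_num)).le hk
      gcongr
      norm_num
    have e4 : (2:ℝ) / 2 ^ r * (10 * r) = 20 * r / 2 ^ r := by ring
    linarith
  have hsum : ∑ s ∈ (Ek k).powerset, PA A s * (D s + D' s)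
      ≤ ∑ s ∈ (Ek k).powerset, PA A s * (5 / √r) := by
    rw [← Finset.sum_mul, hP1, one_mul]
    simp only [mul_add, Finset.sum_add_distrib]
    have hc : 76 * (r:ℝ) / 2 ^ r ≤ 1 / √r := by
      have hsr : 0 < √(r:ℝ) := Real.sqrt_pos.2 (by linarith)
      rw [div_le_div_iff₀ (by positivity) hsr]
      have : (76:ℝ) * r ^ 2 ≤ 2 ^ r := by exact_mod_cast pow_num r hr
      have hsr1 : √(r:ℝ) ≤ r := by
        rw [Real.sqrt_le_left (by linarith)]; nlinarith
      nlinarith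
    have e5 : (5:ℝ) / √r = 2 / √r + 2 / √r + 1 / √r := by ring
    have e6 : 76 * (r:ℝ) / 2 ^ r = 28 * r / 2 ^ r + 28 * r / 2 ^ r + 20 * r / 2 ^ r := by ring
    linarith
  obtain ⟨s, hs, hsD⟩ : ∃ s ∈ (Ek k).powerset, D s + D' s ≤ 5 / √r := by
    by_contra hcon
    push Not at hcon
    have : ∃ s ∈ (Ek k).powerset, 0 < PA A s := by
      by_contra h0
      push Not at h0
      have := Finset.sum_nonpos h0
      linarith
    obtain ⟨s, hs, hsp⟩ := this
    refine absurd hsum (not_le.2 (Finset.sum_lt_sum (fun t ht => ?_) ⟨s, hs, ?_⟩))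
    · exact mul_le_mul_of_nonneg_left (hcon t ht).le (hP0 t)
    · exact mul_lt_mul_of_pos_left (hcon s hs) hsp
  obtain ⟨X, c, τ, hc, hτ, hDs⟩ := hX s
  obtain ⟨Y, c', τ', hc', hτ', hDs'⟩ := hX' s
  set N : ℝ := (Fintype.card α : ℝ) with hN
  have hτN : ∀ (a b : ℝ), |M * a - b| = N * |a / k - b / N| := by
    intro a b
    rw [← abs_of_pos hN0, ← abs_mul, abs_of_pos hN0, mul_sub, mul_div_cancel₀ _ hN0.ne', hNk]
    congr 2
    field_simp
  obtain ⟨σ, hσ⟩ := overlay hcard F F' (√r) hF hF' p p' X Y (c + c') (by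
    intro S T
    have e1 : ∑ u ∈ S, ∑ v ∈ T, (F (p (X u)) (p (X v)) - F' (p' (Y u)) (p' (Y v)))
      = ∑ u ∈ S, ∑ v ∈ T, (Gm s u v - F' (p' (Y u)) (p' (Y v)))
        - ∑ u ∈ S, ∑ v ∈ T, (Gm s u v - F (p (X u)) (p (X v))) := by
      simp only [← Finset.sum_sub_distrib]
      refine Finset.sum_congr rfl fun u _ => Finset.sum_congr rfl fun v _ => ?_
      ring
    rw [e1]
    refine (abs_sub _ _).trans ?_
    linarith [hc S T, hc' S T]) (N * τ) (N * τ')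
    (by simp only [hτN]; rw [← Finset.mul_sum]; gcongr)
    (by simp only [hτN]; rw [← Finset.mul_sum]; gcongr)
  refine ⟨σ, fun S T => ?_⟩
  have b1 := hcut S T
  have b2 := hcut' (S.image σ) (T.image σ)
  rw [Finset.sum_image (fun a _ b _ hab => σ.injective hab)] at b2
  simp only [Finset.sum_image (fun a _ b _ (hab : σ a = σ b) => σ.injective hab)] at b2
  have b3 := hσ S T
  have e1 : ∑ x ∈ S, ∑ y ∈ T, (A x y - B (σ x) (σ y))
      = ∑ x ∈ S, ∑ y ∈ T, (A x y - F (p x) (p y))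
        + ∑ x ∈ S, ∑ y ∈ T, (F (p x) (p y) - F' (p' (σ x)) (p' (σ y)))
        - ∑ x ∈ S, ∑ y ∈ T, (B (σ x) (σ y) - F' (p' (σ x)) (p' (σ y))) := by
    simp only [← Finset.sum_add_distrib, ← Finset.sum_sub_distrib]
    refine Finset.sum_congr rfl fun u _ => Finset.sum_congr rfl fun v _ => ?_
    ring
  have e2 : (c + c') * M ^ 2 + 4 * √r * (N * τ) * N + 4 * √r * (N * τ') * N
      = ((c / k ^ 2 + 4 * √r * τ) + (c' / k ^ 2 + 4 * √r * τ')) * N ^ 2 := by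
    rw [hNk]; field_simp; ring
  have e3 : ((c / k ^ 2 + 4 * √r * τ) + (c' / k ^ 2 + 4 * √r * τ')) * N ^ 2 ≤ 5 / √r * N ^ 2 := by
    gcongr; linarith
  have e4 : 7 / √r * N ^ 2 = 1 / √r * N ^ 2 + 5 / √r * N ^ 2 + 1 / √r * N ^ 2 := by ring
  rw [e1, e4]
  refine (abs_sub _ _).trans (add_le_add ((abs_add_le _ _).trans (add_le_add b1 ?_)) b2)
  linarith

end ACL

namespace ACL

/-- index of the grid cell containing `x` -/
noncomputable def ci (N : ℕ) [NeZero N] (x : ℝ) : Fin N := Fin.ofNat N ⌊(N:ℝ) * x⌋₊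

/-- grid cell -/
def cell (N : ℕ) (i : Fin N) : Set ℝ := Set.Ico ((i:ℝ) / N) (((i:ℝ) + 1) / N)

lemma cell_sub {N : ℕ} (i : Fin N) : cell N i ⊆ Set.Ico 0 1 := by
  have hN : (0:ℝ) < N := by exact_mod_cast i.pos
  intro x hx
  refine ⟨le_trans (by positivity) hx.1, lt_of_lt_of_le hx.2 ?_⟩
  rw [div_le_one hN]
  exact_mod_cast i.2

lemma ci_eq {N : ℕ} [NeZero N] {x : ℝ} (hx : x ∈ Set.Ico (0:ℝ) 1) (i : Fin N) :
    ci N x = i ↔ x ∈ cell N i := by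
  have hN : (0:ℝ) < N := by exact_mod_cast i.pos
  have h0 : 0 ≤ (N:ℝ) * x := mul_nonneg hN.le hx.1
  have h1 : ⌊(N:ℝ) * x⌋₊ < N := by
    rw [Nat.floor_lt h0]
    nlinarith [hx.2]
  have h2 : (ci N x : ℕ) = ⌊(N:ℝ) * x⌋₊ := by
    simp [ci, Fin.ofNat, Nat.mod_eq_of_lt h1]
  rw [Fin.ext_iff, h2, Nat.floor_eq_iff h0, cell, Set.mem_Ico, div_le_iff₀ hN, lt_div_iff₀ hN,
    mul_comm x]

lemma mem_cell_ci {N : ℕ} [NeZero N] {x : ℝ} (hx : x ∈ Set.Ico (0:ℝ) 1) : x ∈ cell N (ci N x) :=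
  (ci_eq hx _).1 rfl

lemma ci_of_mem {N : ℕ} [NeZero N] {x : ℝ} {i : Fin N} (hx : x ∈ cell N i) : ci N x = i :=
  (ci_eq (cell_sub i hx) i).2 hx

lemma measurable_ci (N : ℕ) [NeZero N] : Measurable (ci N) := by
  unfold ci
  exact (measurable_from_nat (f := fun n => Fin.ofNat N n)).comp
    (Nat.measurable_floor.comp (measurable_const.mul measurable_id))

lemma μ01_eq : μ01 = volume.restrict (Set.Ico (0:ℝ) 1) :=
  (Measure.restrict_congr_set Ico_ae_eq_Icc).symm

lemma ae_Ico : ∀ᵐ x ∂μ01, x ∈ Set.Ico (0:ℝ) 1 := by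
  rw [μ01_eq]; exact ae_restrict_mem measurableSet_Ico

instance : IsProbabilityMeasure μ01 := ⟨by simp⟩

lemma meas_cell {N : ℕ} (i : Fin N) : MeasurableSet (cell N i) := measurableSet_Ico

lemma vol_cell {N : ℕ} (i : Fin N) : volume (cell N i) = ENNReal.ofReal (1 / N) := by
  rw [cell, Real.volume_Ico]; congr 1; ring

lemma μ01_ci (N : ℕ) [NeZero N] (i : Fin N) (S : Set ℝ) (hS : MeasurableSet S) :
    μ01 (S ∩ ci N ⁻¹' {i}) = volume (S ∩ cell N i) := by
  rw [μ01_eq, Measure.restrict_apply (hS.inter (measurable_ci N (measurableSet_singleton i)))]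
  congr 1
  ext x
  simp only [Set.mem_inter_iff, Set.mem_preimage, Set.mem_singleton_iff]
  constructor
  · rintro ⟨⟨a, b⟩, c⟩; exact ⟨a, (ci_eq c i).1 b⟩
  · rintro ⟨a, b⟩; exact ⟨⟨a, ci_of_mem b⟩, cell_sub i b⟩

lemma μ01_sum (N : ℕ) [NeZero N] (S : Set ℝ) (hS : MeasurableSet S) :
    μ01 S = ∑ i : Fin N, volume (S ∩ cell N i) := by
  have : S = ⋃ i : Fin N, S ∩ ci N ⁻¹' {i} := by
    ext x; simp
  conv_lhs => rw [this]
  rw [measure_iUnion, tsum_fintype]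
  · exact Finset.sum_congr rfl fun i _ => μ01_ci N i S hS
  · intro i j hij
    refine Set.disjoint_left.2 ?_
    rintro x ⟨_, hx⟩ ⟨_, hx'⟩
    exact hij (by simp at hx hx'; rw [← hx, ← hx'])
  · intro i; exact hS.inter (measurable_ci N (measurableSet_singleton i))

/-- cell permuting map -/
noncomputable def ph {N : ℕ} [NeZero N] (σ : Equiv.Perm (Fin N)) (x : ℝ) : ℝ :=
  if x ∈ Set.Ico (0:ℝ) 1 then x + (((σ (ci N x) : ℕ) : ℝ) - ((ci N x : ℕ) : ℝ)) / N else x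

lemma ph_mem {N : ℕ} [NeZero N] (σ : Equiv.Perm (Fin N)) {x : ℝ} (hx : x ∈ Set.Ico (0:ℝ) 1) :
    ph σ x ∈ cell N (σ (ci N x)) := by
  have h := mem_cell_ci (N := N) hx
  rw [ph, if_pos hx]
  have h1 := h.1
  have h2 := h.2
  rw [add_div] at h2
  refine ⟨?_, ?_⟩
  · rw [sub_div]; linarith
  · rw [sub_div, add_div]; linarith

lemma ci_ph {N : ℕ} [NeZero N] (σ : Equiv.Perm (Fin N)) {x : ℝ} (hx : x ∈ Set.Ico (0:ℝ) 1) :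
    ci N (ph σ x) = σ (ci N x) := ci_of_mem (ph_mem σ hx)

lemma ph_inv {N : ℕ} [NeZero N] (σ τ : Equiv.Perm (Fin N)) (h : ∀ i, τ (σ i) = i) (x : ℝ) :
    ph τ (ph σ x) = x := by
  by_cases hx : x ∈ Set.Ico (0:ℝ) 1
  · have h1 : ph σ x ∈ Set.Ico (0:ℝ) 1 := cell_sub _ (ph_mem σ hx)
    rw [ph, if_pos h1, ci_ph σ hx, h, ph, if_pos hx]
    ring
  · have : ph σ x = x := by rw [ph, if_neg hx]
    rw [this, ph, if_neg hx]

lemma ph_maps {N : ℕ} [NeZero N] (σ : Equiv.Perm (Fin N)) :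
    Set.MapsTo (ph σ) (Set.Icc (0:ℝ) 1) (Set.Icc (0:ℝ) 1) := by
  intro x hx
  by_cases h : x ∈ Set.Ico (0:ℝ) 1
  · exact Set.Ico_subset_Icc_self (cell_sub _ (ph_mem σ h))
  · rw [ph, if_neg h]; exact hx

lemma measurable_ph {N : ℕ} [NeZero N] (σ : Equiv.Perm (Fin N)) : Measurable (ph σ) := by
  unfold ph
  refine Measurable.ite measurableSet_Ico (measurable_id.add ?_) measurable_id
  exact (measurable_from_top (f := fun i : Fin N =>
    (((σ i : ℕ) : ℝ) - ((i : ℕ) : ℝ)) / N)).comp (measurable_ci N)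

lemma ph_mp {N : ℕ} [NeZero N] (σ : Equiv.Perm (Fin N)) : MeasurePreserving (ph σ) μ01 μ01 := by
  refine ⟨measurable_ph σ, ?_⟩
  ext S hS
  rw [Measure.map_apply (measurable_ph σ) hS, μ01_sum N _ (measurable_ph σ hS), μ01_sum N S hS,
    ← Equiv.sum_comp σ (fun i => volume (S ∩ cell N i))]
  refine Finset.sum_congr rfl fun i _ => ?_
  have : ph σ ⁻¹' S ∩ cell N i
      = (fun x => x + (((σ i : ℕ) : ℝ) - ((i : ℕ) : ℝ)) / N) ⁻¹' (S ∩ cell N (σ i)) := by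
    ext x
    simp only [Set.mem_inter_iff, Set.mem_preimage]
    have hi : x ∈ cell N i ↔ x + (((σ i : ℕ) : ℝ) - ((i : ℕ) : ℝ)) / N ∈ cell N (σ i) := by
      simp only [cell, Set.mem_Ico, sub_div, add_div]
      constructor <;> rintro ⟨a, b⟩ <;> constructor <;> linarith
    rw [← hi]
    refine and_congr_left fun hx => ?_
    rw [ph, if_pos (cell_sub i hx), ci_of_mem hx]
  rw [this, measure_preimage_add_right]

lemma ph_inv_mp {N : ℕ} [NeZero N] (σ : Equiv.Perm (Fin N)) : IsInvMeasurePreserving (ph σ) :=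
  ⟨ph_maps σ, ph_mp σ, ph σ.symm, ph_maps _, ph_mp _, fun x _ => ph_inv _ _ (by simp) x,
    fun x _ => ph_inv _ _ (by simp) x⟩

lemma integral_ci (N : ℕ) [NeZero N] (S : Set ℝ) (hS : MeasurableSet S) (f : Fin N → ℝ) :
    ∫ x in S, f (ci N x) ∂μ01 = ∑ i, (volume (S ∩ cell N i)).toReal * f i := by
  rw [← integral_map (φ := ci N) (f := f) (measurable_ci N).aemeasurable
    (measurable_from_top (f := f)).aestronglyMeasurable]
  rw [integral_fintype Integrable.of_finite]
  refine Finset.sum_congr rfl fun i _ => ?_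
  rw [smul_eq_mul, measureReal_def, Measure.map_apply (measurable_ci N) (measurableSet_singleton i),
    Measure.restrict_apply (measurable_ci N (measurableSet_singleton i)), Set.inter_comm,
    μ01_ci N i S hS]

lemma step_bound (N : ℕ) [NeZero N] (C : Fin N → Fin N → ℝ) (d : ℝ)
    (hC : ∀ S T : Finset (Fin N), |∑ x ∈ S, ∑ y ∈ T, C x y| ≤ d * (N:ℝ) ^ 2)
    (S T : Set ℝ) (hS : MeasurableSet S) (hT : MeasurableSet T) :
    |∫ x in S, ∫ y in T, C (ci N x) (ci N y) ∂μ01 ∂μ01| ≤ d := by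
  have hN : (0:ℝ) < N := by exact_mod_cast Nat.pos_of_ne_zero (NeZero.ne N)
  have e1 : ∀ x, ∫ y in T, C (ci N x) (ci N y) ∂μ01
      = ∑ j, (volume (T ∩ cell N j)).toReal * C (ci N x) j := fun x =>
    integral_ci N T hT (fun j => C (ci N x) j)
  simp only [e1]
  rw [integral_ci N S hS (fun i => ∑ j, (volume (T ∩ cell N j)).toReal * C i j)]
  have hb : ∀ (S : Set ℝ) (i : Fin N), (volume (S ∩ cell N i)).toReal ∈ Set.Icc (0:ℝ) (1 / N) := by
    intro S i
    refine ⟨ENNReal.toReal_nonneg, ?_⟩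
    have : volume (S ∩ cell N i) ≤ ENNReal.ofReal (1 / N) := by
      rw [← vol_cell i]; exact measure_mono Set.inter_subset_right
    exact ENNReal.toReal_le_of_le_ofReal (by positivity) this
  have := frac C (d * (N:ℝ) ^ 2) (1 / N) (by positivity) hC _ _ (hb S) (hb T)
  have e2 : d * (N:ℝ) ^ 2 * (1 / N) ^ 2 = d := by field_simp
  rw [e2] at this
  simp only [Finset.mul_sum, ← mul_assoc]
  exact this

lemma map_ci (N : ℕ) [NeZero N] (i : Fin N) : (μ01.map (ci N)) {i} = ENNReal.ofReal (1 / N) := by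
  rw [Measure.map_apply (measurable_ci N) (measurableSet_singleton i)]
  have := μ01_ci N i Set.univ MeasurableSet.univ
  simp only [Set.univ_inter] at this
  rw [this, vol_cell]

lemma integral_pi_ci (N k : ℕ) [NeZero N] (f : (Fin k → Fin N) → ℝ) :
    ∫ x : Fin k → ℝ, f (fun u => ci N (x u)) ∂(Measure.pi fun _ => μ01)
      = 𝔼 X : Fin k → Fin N, f X := by
  have hm : Measurable (fun (x : Fin k → ℝ) u => ci N (x u)) :=
    measurable_pi_lambda _ fun u => (measurable_ci N).comp (measurable_pi_apply u)
  have hP : IsProbabilityMeasure (μ01.map (ci N)) :=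
    Measure.isProbabilityMeasure_map (measurable_ci N).aemeasurable
  have hmap : (Measure.pi fun _ : Fin k => μ01).map (fun (x : Fin k → ℝ) u => ci N (x u))
      = Measure.pi fun _ => μ01.map (ci N) :=
    Measure.pi_map_pi (fun _ => (measurable_ci N).aemeasurable)
  rw [← integral_map (φ := fun (x : Fin k → ℝ) u => ci N (x u)) (f := f) hm.aemeasurable
    (measurable_of_finite f).aestronglyMeasurable, hmap, integral_fintype Integrable.of_finite]
  rw [Fintype.expect_eq_sum_div_card, Finset.sum_div]
  refine Finset.sum_congr rfl fun X _ => ?_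
  rw [measureReal_def, Measure.pi_singleton]
  simp only [map_ci, Finset.prod_const, Finset.card_univ, Fintype.card_fin, smul_eq_mul,
    ENNReal.toReal_pow, Fintype.card_fun]
  rw [ENNReal.toReal_ofReal (by positivity)]
  push_cast
  rw [one_div, inv_pow, div_eq_inv_mul]

lemma pair_map (k : ℕ) (i j : Fin k) (hij : i ≠ j) :
    MeasurePreserving (fun x : Fin k → ℝ => (x i, x j)) (Measure.pi fun _ => μ01)
      (μ01.prod μ01) := by
  refine ⟨by fun_prop, ?_⟩
  have h := ProbabilityTheory.iIndepFun_pi (μ := fun _ : Fin k => μ01)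
    (X := fun _ (x:ℝ) => x) (fun _ => aemeasurable_id)
  have h2 := h.indepFun hij
  rw [ProbabilityTheory.indepFun_iff_map_prod_eq_prod_map_map
    (measurable_pi_apply i).aemeasurable (measurable_pi_apply j).aemeasurable] at h2
  rw [h2]
  have e : ∀ i : Fin k, (Measure.pi fun _ : Fin k => μ01).map (fun x => x i) = μ01 := fun i =>
    (measurePreserving_eval (fun _ : Fin k => μ01) i).map_eq
  rw [e, e]

lemma prod_lip {ι : Type*} [DecidableEq ι] (s : Finset ι) (a b : ι → ℝ) (ha : ∀ i, a i ∈ Set.Icc (0:ℝ) 1)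
    (hb : ∀ i, b i ∈ Set.Icc (0:ℝ) 1) : |∏ i ∈ s, a i - ∏ i ∈ s, b i| ≤ ∑ i ∈ s, |a i - b i| := by
  induction s using Finset.induction_on with
  | empty => simp
  | insert i s hi ih =>
    rw [Finset.prod_insert hi, Finset.prod_insert hi, Finset.sum_insert hi]
    have e : a i * ∏ i ∈ s, a i - b i * ∏ i ∈ s, b i
      = (a i - b i) * ∏ i ∈ s, a i + b i * (∏ i ∈ s, a i - ∏ i ∈ s, b i) := by ring
    rw [e]
    refine (abs_add_le _ _).trans (add_le_add ?_ ?_)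
    · rw [abs_mul]
      refine mul_le_of_le_one_right (abs_nonneg _) ?_
      rw [abs_of_nonneg (Finset.prod_nonneg fun i _ => (ha i).1)]
      exact Finset.prod_le_one (fun i _ => (ha i).1) (fun i _ => (ha i).2)
    · rw [abs_mul]
      refine (mul_le_of_le_one_left (abs_nonneg _) ?_).trans ih
      rw [abs_of_nonneg (hb i).1]; exact (hb i).2

end ACL

namespace ACL

lemma clamp_le (u t : ℝ) (hu : u ∈ Set.Icc (0:ℝ) 1) : |u - max 0 (min 1 t)| ≤ |u - t| := by
  obtain ⟨h0, h1⟩ := hu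
  rcases le_total t 0 with h | h
  · rw [min_eq_right (by linarith), max_eq_left h, abs_of_nonneg (by linarith),
      abs_of_nonneg (by linarith)]; linarith
  · rcases le_total t 1 with h' | h'
    · rw [min_eq_right h', max_eq_right h]
    · rw [min_eq_left h', max_eq_right zero_le_one, abs_of_nonpos (by linarith),
        abs_of_nonpos (by linarith)]; linarith

lemma ci_close {N : ℕ} [NeZero N] {x : ℝ} (hx : x ∈ Set.Ico (0:ℝ) 1) :
    |x - ((ci N x : ℕ) : ℝ) / N| ≤ 1 / N := by
  have h := mem_cell_ci (N := N) hx
  have h1 := h.1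
  have h2 := h.2
  rw [add_div] at h2
  rw [abs_of_nonneg (by linarith)]; linarith

lemma ae_Ico2 : ∀ᵐ z ∂(μ01.prod μ01), z.1 ∈ Set.Ico (0:ℝ) 1 ∧ z.2 ∈ Set.Ico (0:ℝ) 1 := by
  have h1 := (Measure.quasiMeasurePreserving_fst (μ := μ01) (ν := μ01)).ae ae_Ico
  have h2 := (Measure.quasiMeasurePreserving_snd (μ := μ01) (ν := μ01)).ae ae_Ico
  filter_upwards [h1, h2] with z a b using ⟨a, b⟩

lemma bdd_int {β : Type*} [MeasurableSpace β] (μ : Measure β) [IsFiniteMeasure μ] (f : β → ℝ)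
    (hf : Measurable f) (C : ℝ) (h : ∀ x, |f x| ≤ C) : Integrable f μ :=
  Integrable.of_bound hf.aestronglyMeasurable C (Eventually.of_forall h)

lemma meas_step {N : ℕ} [NeZero N] (A : Fin N → Fin N → ℝ) :
    Measurable (fun z : ℝ × ℝ => A (ci N z.1) (ci N z.2)) :=
  (measurable_of_finite (fun q : Fin N × Fin N => A q.1 q.2)).comp
    (((measurable_ci N).comp measurable_fst).prodMk ((measurable_ci N).comp measurable_snd))

lemma approx (U : ℝ → ℝ → ℝ) (hU : IsGraphon U) (η : ℝ) (hη : 0 < η) :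
    ∃ N0 : ℕ, ∀ N : ℕ, N0 ≤ N → ∀ _ : NeZero N, ∃ A : Fin N → Fin N → ℝ,
      (∀ i j, A i j ∈ Set.Icc (0:ℝ) 1) ∧ (∀ i j, A i j = A j i) ∧
      ∫ z : ℝ × ℝ, |U z.1 z.2 - A (ci N z.1) (ci N z.2)| ∂(μ01.prod μ01) ≤ η := by
  obtain ⟨hm, hsym, hb⟩ := hU
  have hUi : Integrable (Function.uncurry U) (μ01.prod μ01) :=
    bdd_int _ _ hm 1 (fun z => by
      rw [Function.uncurry, abs_of_nonneg (hb _ _).1]; exact (hb _ _).2)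
  obtain ⟨g, hgc, hg, hgcont, hgi⟩ :=
    hUi.exists_hasCompactSupport_integral_sub_le (half_pos hη)
  have hgu := hgc.uniformContinuous_of_continuous hgcont
  rw [Metric.uniformContinuous_iff] at hgu
  obtain ⟨δ, hδ, hgu⟩ := hgu (η / 2) (half_pos hη)
  obtain ⟨N0, hN0⟩ := exists_nat_gt (1 / δ)
  refine ⟨N0, fun N hN _ => ?_⟩
  have hNpos : (0:ℝ) < N := by exact_mod_cast Nat.pos_of_ne_zero (NeZero.ne N)
  have hNδ : (1:ℝ) / N < δ := by
    have h1 : 1 / δ < N := hN0.trans_le (by exact_mod_cast hN)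
    rw [div_lt_iff₀ hδ] at h1
    rw [div_lt_iff₀ hNpos]; linarith
  set A : Fin N → Fin N → ℝ := fun i j => max 0 (min 1
    ((g ((i:ℝ) / N, (j:ℝ) / N) + g ((j:ℝ) / N, (i:ℝ) / N)) / 2)) with hA
  refine ⟨A, fun i j => ⟨le_max_left _ _, max_le zero_le_one (min_le_left _ _)⟩, fun i j => ?_, ?_⟩
  · simp only [hA]; rw [add_comm]
  set f1 : ℝ × ℝ → ℝ := fun z => |Function.uncurry U z - g z| with hf1
  have hf1i : Integrable f1 (μ01.prod μ01) := (hUi.sub hgi).abs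
  have hsw : MeasurePreserving Prod.swap (μ01.prod μ01) (μ01.prod μ01) :=
    Measure.measurePreserving_swap
  have hf1s : Integrable (fun z => f1 z.swap) (μ01.prod μ01) :=
    hsw.integrable_comp_of_integrable hf1i
  have hswap : ∫ z, f1 z.swap ∂(μ01.prod μ01) = ∫ z, f1 z ∂(μ01.prod μ01) :=
    integral_prod_swap f1
  have hpt : ∀ᵐ z ∂(μ01.prod μ01), |U z.1 z.2 - A (ci N z.1) (ci N z.2)|
      ≤ (f1 z + f1 z.swap) / 2 + η / 2 := by
    filter_upwards [ae_Ico2] with z hz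
    refine (clamp_le _ _ (hb _ _)).trans ?_
    have c1 := ci_close (N := N) hz.1
    have c2 := ci_close (N := N) hz.2
    have g1 := hgu (a := (z.1, z.2)) (b := (((ci N z.1 : ℕ) : ℝ) / N, ((ci N z.2 : ℕ) : ℝ) / N)) (by
      rw [Prod.dist_eq, Real.dist_eq, Real.dist_eq]
      exact max_lt (c1.trans_lt hNδ) (c2.trans_lt hNδ))
    have g2 := hgu (a := (z.2, z.1)) (b := (((ci N z.2 : ℕ) : ℝ) / N, ((ci N z.1 : ℕ) : ℝ) / N)) (by
      rw [Prod.dist_eq, Real.dist_eq, Real.dist_eq]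
      exact max_lt (c2.trans_lt hNδ) (c1.trans_lt hNδ))
    rw [Real.dist_eq] at g1 g2
    have a1 : f1 z = |U z.1 z.2 - g (z.1, z.2)| := rfl
    have a2 : f1 z.swap = |U z.1 z.2 - g (z.2, z.1)| := by
      rw [hsym z.1 z.2]; rfl
    rw [a1, a2]
    set G1 := g (((ci N z.1 : ℕ) : ℝ) / N, ((ci N z.2 : ℕ) : ℝ) / N)
    set G2 := g (((ci N z.2 : ℕ) : ℝ) / N, ((ci N z.1 : ℕ) : ℝ) / N)
    have e : U z.1 z.2 - (G1 + G2) / 2 = ((U z.1 z.2 - g (z.1, z.2)) + (U z.1 z.2 - g (z.2, z.1)) +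
      (g (z.1, z.2) - G1) + (g (z.2, z.1) - G2)) / 2 := by ring
    rw [e, abs_div, abs_two]
    have := abs_add_le (U z.1 z.2 - g (z.1, z.2)) (U z.1 z.2 - g (z.2, z.1))
    have := abs_add_le ((U z.1 z.2 - g (z.1, z.2)) + (U z.1 z.2 - g (z.2, z.1))) (g (z.1, z.2) - G1)
    have := abs_add_le ((U z.1 z.2 - g (z.1, z.2)) + (U z.1 z.2 - g (z.2, z.1)) +
      (g (z.1, z.2) - G1)) (g (z.2, z.1) - G2)
    linarith
  have hi2 : Integrable (fun z => (f1 z + f1 z.swap) / 2 + η / 2) (μ01.prod μ01) :=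
    ((hf1i.add hf1s).div_const 2).add (integrable_const _)
  refine (integral_mono_of_nonneg (Eventually.of_forall fun z => abs_nonneg _) hi2 hpt).trans ?_
  have hi3 : Integrable (fun z => (f1 z + f1 z.swap) / 2) (μ01.prod μ01) :=
    (hf1i.add hf1s).div_const 2
  rw [integral_add hi3 (integrable_const _), integral_div,
    integral_add hf1i hf1s, hswap]
  have : ∫ z, f1 z ∂(μ01.prod μ01) ≤ η / 2 := hg
  simp
  linarith

lemma hom_close (U : ℝ → ℝ → ℝ) (hU : IsGraphon U) (η : ℝ) (k N : ℕ) [NeZero N]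
    (A : Fin N → Fin N → ℝ) (hA : ∀ i j, A i j ∈ Set.Icc (0:ℝ) 1)
    (hη : ∫ z : ℝ × ℝ, |U z.1 z.2 - A (ci N z.1) (ci N z.2)| ∂(μ01.prod μ01) ≤ η)
    (s : Finset (Fin k × Fin k)) (hs : s ⊆ Ek k) :
    |(∫ x : Fin k → ℝ, ∏ p ∈ s, U (x p.1) (x p.2) ∂(Measure.pi fun _ => μ01)) - hd s A|
      ≤ k ^ 2 * η := by
  obtain ⟨hm, hsym, hb⟩ := hU
  have hη0 : 0 ≤ η := le_trans (integral_nonneg fun z => abs_nonneg _) hη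
  unfold hd
  rw [← integral_pi_ci N k (fun X => ∏ p ∈ s, A (X p.1) (X p.2))]
  have mU : ∀ p : Fin k × Fin k, Measurable (fun x : Fin k → ℝ => U (x p.1) (x p.2)) := fun p =>
    hm.comp (g := Function.uncurry U) (f := fun x : Fin k → ℝ => (x p.1, x p.2))
      ((measurable_pi_apply p.1).prodMk (measurable_pi_apply p.2))
  have mA : ∀ p : Fin k × Fin k, Measurable (fun x : Fin k → ℝ => A (ci N (x p.1)) (ci N (x p.2))) :=
    fun p => (meas_step A).comp (f := fun x : Fin k → ℝ => (x p.1, x p.2)) ((measurable_pi_apply p.1).prodMk (measurable_pi_apply p.2))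
  have i1 : Integrable (fun x : Fin k → ℝ => ∏ p ∈ s, U (x p.1) (x p.2)) (Measure.pi fun _ => μ01) := by
    refine bdd_int _ _ (Finset.measurable_prod _ fun p _ => mU p) 1 fun x => ?_
    rw [abs_of_nonneg (Finset.prod_nonneg fun i _ => (hb _ _).1)]
    exact Finset.prod_le_one (fun i _ => (hb _ _).1) (fun i _ => (hb _ _).2)
  have i2 : Integrable (fun x : Fin k → ℝ => ∏ p ∈ s, A (ci N (x p.1)) (ci N (x p.2)))
      (Measure.pi fun _ => μ01) := by
    refine bdd_int _ _ (Finset.measurable_prod _ fun p _ => mA p) 1 fun x => ?_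
    rw [abs_of_nonneg (Finset.prod_nonneg fun i _ => (hA _ _).1)]
    exact Finset.prod_le_one (fun i _ => (hA _ _).1) (fun i _ => (hA _ _).2)
  have i3 : ∀ p : Fin k × Fin k, Integrable
      (fun x : Fin k → ℝ => |U (x p.1) (x p.2) - A (ci N (x p.1)) (ci N (x p.2))|)
      (Measure.pi fun _ => μ01) := by
    intro p
    refine (bdd_int _ _ ((mU p).sub (mA p)) 1 fun x => ?_).abs
    have a1 := hb (x p.1) (x p.2)
    have a2 := hA (ci N (x p.1)) (ci N (x p.2))
    rw [Set.mem_Icc] at a1 a2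
    simp only [Pi.sub_apply]
    rw [abs_le]; constructor <;> linarith
  rw [← integral_sub i1 i2]
  refine (abs_integral_le_integral_abs).trans ?_
  have st : ∫ x : Fin k → ℝ, |∏ p ∈ s, U (x p.1) (x p.2) - ∏ p ∈ s, A (ci N (x p.1)) (ci N (x p.2))|
        ∂(Measure.pi fun _ => μ01)
      ≤ ∫ x : Fin k → ℝ, ∑ p ∈ s, |U (x p.1) (x p.2) - A (ci N (x p.1)) (ci N (x p.2))|
        ∂(Measure.pi fun _ => μ01) := by
    refine integral_mono (i1.sub i2).abs (integrable_finsetSum _ fun p _ => i3 p) fun x => ?_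
    exact prod_lip s (fun p => U (x p.1) (x p.2)) (fun p => A (ci N (x p.1)) (ci N (x p.2)))
      (fun p => hb _ _) (fun p => hA _ _)
  refine st.trans ?_
  rw [integral_finsetSum _ fun p _ => i3 p]
  have each : ∀ p ∈ s, ∫ x : Fin k → ℝ, |U (x p.1) (x p.2) - A (ci N (x p.1)) (ci N (x p.2))|
        ∂(Measure.pi fun _ => μ01) ≤ η := by
    intro p hp
    have hne : p.1 ≠ p.2 := by
      have := hs hp
      simp only [Ek, Finset.mem_filter] at this
      exact this.2.ne
    have mp := pair_map k p.1 p.2 hne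
    refine le_trans (le_of_eq ?_) hη
    rw [← mp.map_eq, integral_map mp.measurable.aemeasurable]
    rw [mp.map_eq]
    exact ((hm.sub (meas_step A)).abs).aestronglyMeasurable
  refine (Finset.sum_le_sum each).trans ?_
  rw [Finset.sum_const, nsmul_eq_mul]
  have : s.card ≤ k ^ 2 := (Finset.card_le_univ s).trans (by simp [sq])
  have : (s.card : ℝ) ≤ k ^ 2 := by exact_mod_cast this
  gcongr

lemma hom_graph (k : ℕ) (s : Finset (Fin k × Fin k)) (hs : s ⊆ Ek k) :
    ∃ F : SimpleGraph (Fin k), ∀ W : ℝ → ℝ → ℝ, homDensity F W =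
      ∫ x : Fin k → ℝ, ∏ p ∈ s, W (x p.1) (x p.2) ∂(Measure.pi fun _ => μ01) := by
  classical
  refine ⟨SimpleGraph.fromRel fun u v => (u, v) ∈ s, fun W => ?_⟩
  unfold homDensity
  have : (Finset.univ.filter (fun p : Fin k × Fin k => p.1 < p.2 ∧
      (SimpleGraph.fromRel fun u v => (u, v) ∈ s).Adj p.1 p.2)) = s := by
    ext p
    simp only [Finset.mem_filter, Finset.mem_univ, true_and, SimpleGraph.fromRel_adj]
    have hs' : ∀ q ∈ s, q.1 < q.2 := fun q hq => by
      have := hs hq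
      simp only [Ek, Finset.mem_filter] at this
      exact this.2
    constructor
    · rintro ⟨h1, _, h2 | h2⟩
      · exact h2
      · exact absurd (hs' _ h2) (not_lt.2 h1.le)
    · intro hp
      exact ⟨hs' _ hp, (hs' _ hp).ne, Or.inl hp⟩
  refine integral_congr_ae (Eventually.of_forall fun x => ?_)
  show _ = ∏ p ∈ s, W (x p.1) (x p.2)
  conv_rhs => rw [← this]
  refine Finset.prod_congr ?_ fun _ _ => rfl
  ext p; simp

lemma cut_bound (D : ℝ → ℝ → ℝ) (hD : Measurable (Function.uncurry D)) (hb : ∀ x y, |D x y| ≤ 1)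
    (C : ℝ → ℝ → ℝ) (hCm : Measurable (Function.uncurry C)) (hCb : ∀ x y, |C x y| ≤ 1) (d e : ℝ)
    (hC : ∀ S T : Set ℝ, MeasurableSet S → MeasurableSet T →
      |∫ x in S, ∫ y in T, C x y ∂μ01 ∂μ01| ≤ d)
    (he : ∫ z : ℝ × ℝ, |D z.1 z.2 - C z.1 z.2| ∂(μ01.prod μ01) ≤ e) :
    cutNorm D ≤ d + e := by
  have hd0 : 0 ≤ d := (abs_nonneg _).trans (hC ∅ ∅ MeasurableSet.empty MeasurableSet.empty)
  have he0 : 0 ≤ e := le_trans (integral_nonneg fun z => abs_nonneg _) he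
  unfold cutNorm
  refine Real.sSup_le ?_ (by positivity)
  rintro _ ⟨S, T, hS, hT, hS1, hT1, rfl⟩
  have hrS : (volume : Measure ℝ).restrict S = μ01.restrict S := by
    rw [Measure.restrict_restrict hS, Set.inter_eq_left.2 hS1]
  have hrT : (volume : Measure ℝ).restrict T = μ01.restrict T := by
    rw [Measure.restrict_restrict hT, Set.inter_eq_left.2 hT1]
  rw [hrS, hrT]
  have iD : Integrable (Function.uncurry D) (μ01.prod μ01) := bdd_int _ _ hD 1 fun z => hb _ _
  have iC : Integrable (Function.uncurry C) (μ01.prod μ01) := bdd_int _ _ hCm 1 fun z => hCb _ _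
  have eD : ∫ x in S, ∫ y in T, D x y ∂μ01 ∂μ01
      = ∫ z in S ×ˢ T, Function.uncurry D z ∂(μ01.prod μ01) :=
    (setIntegral_prod _ iD.integrableOn).symm
  have eC : ∫ x in S, ∫ y in T, C x y ∂μ01 ∂μ01
      = ∫ z in S ×ˢ T, Function.uncurry C z ∂(μ01.prod μ01) :=
    (setIntegral_prod _ iC.integrableOn).symm
  have hCST := hC S T hS hT
  rw [eC] at hCST
  rw [eD]
  have e1 : ∫ z in S ×ˢ T, Function.uncurry D z ∂(μ01.prod μ01)
      = ∫ z in S ×ˢ T, Function.uncurry C z ∂(μ01.prod μ01)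
        + ∫ z in S ×ˢ T, (Function.uncurry D z - Function.uncurry C z) ∂(μ01.prod μ01) := by
    rw [integral_sub iD.integrableOn iC.integrableOn]; ring
  rw [e1]
  refine (abs_add_le _ _).trans (add_le_add hCST ?_)
  refine abs_integral_le_integral_abs.trans (le_trans ?_ he)
  exact setIntegral_le_integral (iD.sub iC).abs (Eventually.of_forall fun z => abs_nonneg _)

lemma cutDist_le (U W : ℝ → ℝ → ℝ) (φ : ℝ → ℝ) (hφ : IsInvMeasurePreserving φ) (d : ℝ)
    (h : cutNorm (fun x y => U x y - W (φ x) (φ y)) ≤ d) : cutDist U W ≤ d := by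
  refine le_trans (csInf_le ⟨0, ?_⟩ ⟨φ, hφ, rfl⟩) h
  rintro _ ⟨ψ, _, rfl⟩
  refine Real.sSup_nonneg ?_
  rintro _ ⟨S, T, _, _, _, _, rfl⟩
  exact abs_nonneg _

lemma diff_le_one {W U : ℝ → ℝ → ℝ} (hU : IsGraphon U) (hW : IsGraphon W) (x y x' y' : ℝ) :
    |U x y - W x' y'| ≤ 1 := by
  have a1 := hU.2.2 x y
  have a2 := hW.2.2 x' y'
  rw [Set.mem_Icc] at a1 a2
  rw [abs_le]; constructor <;> linarith

lemma cutDist_le_one (U W : ℝ → ℝ → ℝ) (hU : IsGraphon U) (hW : IsGraphon W) : cutDist U W ≤ 1 := by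
  refine cutDist_le U W id ⟨fun x hx => hx, MeasurePreserving.id _, id, fun x hx => hx,
    MeasurePreserving.id _, fun _ _ => rfl, fun _ _ => rfl⟩ 1 ?_
  have := cut_bound (fun x y => U x y - W (id x) (id y)) (hU.1.sub hW.1)
    (fun x y => diff_le_one hU hW _ _ _ _) (fun _ _ => 0) measurable_const (by simp) 0 1
    (by simp) ?_
  · simpa using this
  · have i1 : Integrable (fun z : ℝ × ℝ => |U z.1 z.2 - W (id z.1) (id z.2) - 0|) (μ01.prod μ01) :=
      bdd_int _ _ (((hU.1.sub hW.1).sub measurable_const).abs) 1 (fun z => by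
        simpa using diff_le_one hU hW z.1 z.2 z.1 z.2)
    refine (integral_mono (g := fun _ => (1:ℝ)) i1 (integrable_const _) (fun z => ?_)).trans (by simp)
    simpa using diff_le_one hU hW z.1 z.2 z.1 z.2

lemma final_cut (U W : ℝ → ℝ → ℝ) (hU : IsGraphon U) (hW : IsGraphon W) (N : ℕ) [NeZero N]
    (A B : Fin N → Fin N → ℝ) (hA : ∀ i j, A i j ∈ Set.Icc (0:ℝ) 1)
    (hB : ∀ i j, B i j ∈ Set.Icc (0:ℝ) 1) (σ : Equiv.Perm (Fin N)) (d η : ℝ)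
    (hσ : ∀ S T : Finset (Fin N),
      |∑ x ∈ S, ∑ y ∈ T, (A x y - B (σ x) (σ y))| ≤ d * (N : ℝ) ^ 2)
    (hηA : ∫ z : ℝ × ℝ, |U z.1 z.2 - A (ci N z.1) (ci N z.2)| ∂(μ01.prod μ01) ≤ η)
    (hηB : ∫ z : ℝ × ℝ, |W z.1 z.2 - B (ci N z.1) (ci N z.2)| ∂(μ01.prod μ01) ≤ η) :
    cutDist U W ≤ d + 2 * η := by
  refine cutDist_le U W (ph σ) (ph_inv_mp σ) _ ?_
  have hmp : MeasurePreserving (Prod.map (ph σ) (ph σ)) (μ01.prod μ01) (μ01.prod μ01) :=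
    (ph_mp σ).prod (ph_mp σ)
  have mWp : Measurable (fun z : ℝ × ℝ => W (ph σ z.1) (ph σ z.2)) := hW.1.comp hmp.measurable
  have mC : Measurable (fun z : ℝ × ℝ => A (ci N z.1) (ci N z.2) - B (σ (ci N z.1)) (σ (ci N z.2))) :=
    (meas_step A).sub (meas_step fun i j => B (σ i) (σ j))
  refine cut_bound (fun x y => U x y - W (ph σ x) (ph σ y)) (hU.1.sub mWp) (fun x y => diff_le_one hU hW _ _ _ _)
    (fun x y => A (ci N x) (ci N y) - B (σ (ci N x)) (σ (ci N y))) mC ?_ d (2 * η) ?_ ?_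
  · intro x y
    have a1 := hA (ci N x) (ci N y)
    have a2 := hB (σ (ci N x)) (σ (ci N y))
    rw [Set.mem_Icc] at a1 a2
    rw [abs_le]; constructor <;> linarith
  · intro S T hS hT
    exact step_bound N (fun i j => A i j - B (σ i) (σ j)) d hσ S T hS hT
  · set f : ℝ × ℝ → ℝ := fun z => |U z.1 z.2 - A (ci N z.1) (ci N z.2)| with hf
    set g : ℝ × ℝ → ℝ := fun z => |W z.1 z.2 - B (ci N z.1) (ci N z.2)| with hg
    have ab : ∀ {u v : ℝ}, u ∈ Set.Icc (0:ℝ) 1 → v ∈ Set.Icc (0:ℝ) 1 → |u - v| ≤ 1 := by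
      intro u v a1 a2
      rw [Set.mem_Icc] at a1 a2
      rw [abs_le]; constructor <;> linarith
    have mg : Measurable g := (hW.1.sub (meas_step B)).abs
    have fi : Integrable f (μ01.prod μ01) :=
      bdd_int _ _ (hU.1.sub (meas_step A)).abs 1 fun z => by
        simpa [hf] using ab (hU.2.2 _ _) (hA _ _)
    have gi : Integrable g (μ01.prod μ01) :=
      bdd_int _ _ mg 1 fun z => by
        simpa [hg] using ab (hW.2.2 _ _) (hB _ _)
    have gpi : Integrable (fun z => g (Prod.map (ph σ) (ph σ) z)) (μ01.prod μ01) :=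
      hmp.integrable_comp_of_integrable gi
    have gint : ∫ z, g (Prod.map (ph σ) (ph σ) z) ∂(μ01.prod μ01) = ∫ z, g z ∂(μ01.prod μ01) := by
      conv_rhs => rw [← hmp.map_eq]
      rw [integral_map hmp.measurable.aemeasurable mg.aestronglyMeasurable]
    refine (integral_mono_of_nonneg (Eventually.of_forall fun z => abs_nonneg _)
      (fi.add gpi) ?_).trans ?_
    · filter_upwards [ae_Ico2] with z hz
      simp only [Pi.add_apply, hf, hg, Prod.map]
      rw [ci_ph σ hz.1, ci_ph σ hz.2]
      have e : U z.1 z.2 - W (ph σ z.1) (ph σ z.2)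
          - (A (ci N z.1) (ci N z.2) - B (σ (ci N z.1)) (σ (ci N z.2)))
          = (U z.1 z.2 - A (ci N z.1) (ci N z.2))
            - (W (ph σ z.1) (ph σ z.2) - B (σ (ci N z.1)) (σ (ci N z.2))) := by ring
      rw [e]
      exact abs_sub _ _
    · simp only [Pi.add_apply]
      rw [integral_add fi gpi, gint]
      linarith

end ACL
/-- Anti-counting Lemma: if all homomorphism densities of graphs on `k` nodes in `U` and `W`
differ by at most `2^(−k²)`, then `δ_□(U,W) ≤ 20/√(log₂ k)`. -/
theorem anti_counting_lemma (k : ℕ) (hk : 2 ≤ k) (U W : ℝ → ℝ → ℝ)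
    (hU : IsGraphon U) (hW : IsGraphon W)
    (h : ∀ F : SimpleGraph (Fin k), |homDensity F U - homDensity F W| ≤ 1 / 2 ^ (k ^ 2)) :
    cutDist U W ≤ 20 / Real.sqrt (Real.logb 2 k) := by
  have hk2 : (2:ℝ) ≤ k := by exact_mod_cast hk
  have hk0 : (0:ℝ) < k := by linarith
  set L := Real.logb 2 k with hL
  have hL1 : 1 ≤ L := by
    rw [hL, Real.le_logb_iff_rpow_le (by norm_num) hk0]; simpa using hk2
  have hsL : 0 < √L := Real.sqrt_pos.2 (by linarith)
  by_cases hL4 : L ≤ 400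
  · refine (ACL.cutDist_le_one U W hU hW).trans ?_
    rw [le_div_iff₀ hsL, one_mul, Real.sqrt_le_left (by norm_num)]
    linarith
  push Not at hL4
  set r := Nat.log 64 k with hr
  have hr1 : 64 ^ r ≤ k := Nat.pow_log_le_self 64 (by omega)
  have hr2 : k < 64 ^ (r + 1) := Nat.lt_pow_succ_log_self (by norm_num) k
  have hLr : L ≤ 6 * (r + 1) := by
    rw [hL, Real.logb_le_iff_le_rpow (by norm_num) hk0]
    have e : (2:ℝ) ^ (6 * ((r:ℝ) + 1)) = ((64 ^ (r + 1) : ℕ) : ℝ) := by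
      have : (6 * ((r:ℝ) + 1)) = ((6 * (r + 1) : ℕ) : ℝ) := by push_cast; ring
      rw [this, Real.rpow_natCast, pow_mul]
      push_cast
      norm_num
    rw [e]
    exact_mod_cast hr2.le
  have hr66 : 66 ≤ r := by
    have : (65:ℝ) < r := by linarith
    have : 65 < r := by exact_mod_cast this
    omega
  have hr66' : (66:ℝ) ≤ r := by exact_mod_cast hr66
  have hsr : 0 < √(r:ℝ) := Real.sqrt_pos.2 (by linarith)
  set η : ℝ := min (1 / (4 * k ^ 2 * 2 ^ (k ^ 2))) (1 / (20 * √r)) with hη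
  have hη0 : 0 < η := lt_min (by positivity) (by positivity)
  obtain ⟨N0, hN0⟩ := ACL.approx U hU η hη0
  obtain ⟨N1, hN1⟩ := ACL.approx W hW η hη0
  set M := max (max N0 N1) 1 with hM
  have hM1 : 1 ≤ M := le_max_right _ _
  have hMN : M ≤ k * M := Nat.le_mul_of_pos_left _ (by omega)
  have hNz : NeZero (k * M) := ⟨by have : 0 < k * M := by omega
                                   exact this.ne'⟩
  obtain ⟨A, hA, hAs, hAe⟩ := hN0 (k * M)
    (((le_max_left _ _).trans (le_max_left _ _)).trans hMN) hNz
  obtain ⟨B, hB, hBs, hBe⟩ := hN1 (k * M)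
    (((le_max_right _ _).trans (le_max_left _ _)).trans hMN) hNz
  have hne : Nonempty (Fin (k * M)) := ⟨0⟩
  have hkη : (k:ℝ) ^ 2 * η ≤ 1 / 4 * (1 / 2 ^ (k ^ 2)) := by
    calc (k:ℝ) ^ 2 * η ≤ k ^ 2 * (1 / (4 * k ^ 2 * 2 ^ (k ^ 2))) := by
          gcongr; exact min_le_left _ _
      _ = _ := by field_simp
  obtain ⟨σ, hσ⟩ := ACL.core r k M hr66 hr1 (by simp) A B hA hAs hB hBs (by
    intro s hs
    obtain ⟨F, hF⟩ := ACL.hom_graph k s hs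
    have h1 := h F
    rw [hF, hF] at h1
    have h2 := ACL.hom_close U hU η k (k * M) A hA hAe s hs
    have h3 := ACL.hom_close W hW η k (k * M) B hB hBe s hs
    have hp : (0:ℝ) < 1 / 2 ^ (k ^ 2) := by positivity
    have e : (2:ℝ) / 2 ^ (k ^ 2) = 2 * (1 / 2 ^ (k ^ 2)) := by ring
    rw [e]
    rw [abs_le] at *
    constructor <;> linarith [h1.1, h1.2, h2.1, h2.2, h3.1, h3.2])
  have hfin := ACL.final_cut U W hU hW (k * M) A B hA hB σ (7 / √r) η
    (by simpa using hσ) hAe hBe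
  refine hfin.trans ?_
  have hη2 : 2 * η ≤ 1 / 10 / √r := by
    have : η ≤ 1 / (20 * √r) := min_le_right _ _
    have e : 1 / 10 / √(r:ℝ) = 2 * (1 / (20 * √r)) := by field_simp; norm_num
    linarith
  have e : 7 / √(r:ℝ) + 1 / 10 / √r = (71 / 10) / √r := by ring
  refine (add_le_add_right hη2 _).trans ?_
  rw [e, div_le_div_iff₀ hsr hsL]
  have e1 : √L ^ 2 = L := Real.sq_sqrt (by linarith)
  have e2 : √(r:ℝ) ^ 2 = r := Real.sq_sqrt (by linarith)
  refine (sq_le_sq₀ (by positivity) (by positivity)).1 ?_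
  rw [mul_pow, mul_pow, e1, e2]
  linarith
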